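/- arXiv:1508.00076 — 3 statements merged into one kernel-verified Lean document; each statement's English description precedes it below -/
import Mathlib

section
/- Let ρ > 0, n ≥ 1, and let H_0 = 1, H_1, …, H_{n−1} be real numbers; let S_n(θ) := Σ_{m=1}^{n}(e^{θ_m}−1) + Σ_{k=1}^{n−1} H_k Σ_{m=k}^{n−1}(e^{θ_{m−k+1}}−1)·exp(Σ_{i=m−k+2}^{m} θ_i)·(e^{θ_{m+1}}−1). Suppose that for each l = 1,2,… the random vector X_l^n = (X_{l,1},…,X_{l,n}) satisfies E exp(Σ_{i=1}^{n} θ_i X_{l,i}) = exp(lρ S_n(θ)) for all θ ∈ ℝⁿ. Then for every fixed θ ∈ ℝⁿ, log E exp(Σ_{i=1}^{n} θ_i (X_{l,i} − lρ)/√(lρ)) → (1/2) θᵀ Σ(H) θ as l → ∞, where Σ(H) is the n×n matrix with entries Σ(H)_{ij} = H_{|i−j|}. Consequently the normalized vectors (X_l^n − lρ e_n)/√(lρ) converge in distribution to the centered n-dimensional Gaussian law with covariance matrix Σ(H). -/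
open MeasureTheory ProbabilityTheory

/-- `S_n(θ)`: the cumulant-generating-function expression of the sampled
M/G/∞ queue-length process. -/
noncomputable def Sfun (H : ℕ → ℝ) (n : ℕ) (θ : ℕ → ℝ) : ℝ :=
  (∑ m ∈ Finset.Icc 1 n, (Real.exp (θ m) - 1)) +
    ∑ k ∈ Finset.Icc 1 (n - 1), H k *
      ∑ m ∈ Finset.Icc k (n - 1),
        (Real.exp (θ (m - k + 1)) - 1) *
          Real.exp (∑ i ∈ Finset.Icc (m - k + 2) m, θ i) * (Real.exp (θ (m + 1)) - 1)

/-!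
The mean of every coordinate under `r • S_n` is `r`, and the second-order part of `S_n` at `0` is
half the Toeplitz form `∑ᵢⱼ θᵢ θⱼ H_{|i-j|}`; hence
`r * S_n(θ / √r) - √r * ∑ᵢ θᵢ → (1 / 2) * ∑ᵢⱼ θᵢ θⱼ H_{|i-j|}` as `r → ∞`, for real and for complex
`θ`. The hypothesis determines the moment generating function of each linear statistic on `ℝ`, so
by the identity theorem on `ℂ`, where `exp (r * S_n)` is entire along complex lines. Real arguments
then give the limit of the cumulant generating functions, and imaginary ones that of the
characteristic functions, which yields both the positive semidefiniteness of `Σ(H)` (a limit of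
characteristic functions is bounded by `1`) and, by Lévy's theorem, convergence in distribution.
-/

section ToeplitzForm

open Finset

/-- The quadratic form `∑ᵢⱼ wᵢ wⱼ h_{|i-j|}` over `1 ≤ i, j ≤ n`, indexed from `1` as in `Sfun`. -/
def toeplitzForm {R : Type*} [CommSemiring R] (h : ℕ → R) (n : ℕ) (w : ℕ → R) : R :=
  ∑ i ∈ Icc 1 n, ∑ j ∈ Icc 1 n, w i * w j * h (Nat.dist i j)

/-- The matrix `Σ(h)` with entries `h_{|i-j|}`. -/
def toeplitzMatrix {R : Type*} (h : ℕ → R) (n : ℕ) : Matrix (Fin n) (Fin n) R :=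
  Matrix.of fun i j => h (Nat.dist i j)

lemma toeplitzMatrix_isHermitian (h : ℕ → ℝ) (n : ℕ) : (toeplitzMatrix h n).IsHermitian := by
  ext i j
  simp [toeplitzMatrix, Nat.dist_comm]

lemma sum_Icc_one_eq_sum_fin {M : Type*} [AddCommMonoid M] (n : ℕ) (f : ℕ → M) :
    ∑ i ∈ Icc 1 n, f i = ∑ i : Fin n, f (i + 1) := by
  rw [Fin.sum_univ_eq_sum_range (fun i => f (i + 1)), range_eq_Ico, sum_Ico_add' f 0 n 1]
  rfl

lemma dotProduct_toeplitzMatrix_mulVec {R : Type*} [CommSemiring R] (h : ℕ → R) {n : ℕ}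
    (θ : Fin n → R) :
    θ ⬝ᵥ (toeplitzMatrix h n).mulVec θ = ∑ i, ∑ j, θ i * θ j * h (Nat.dist i j) := by
  simp only [dotProduct, Matrix.mulVec, toeplitzMatrix, Matrix.of_apply, mul_sum]
  exact sum_congr rfl fun i _ => sum_congr rfl fun j _ => by ring

lemma toeplitzForm_eq_dotProduct_mulVec {R : Type*} [CommSemiring R] (h : ℕ → R) (n : ℕ)
    (w : ℕ → R) :
    toeplitzForm h n w =
      (fun i : Fin n => w (i + 1)) ⬝ᵥ (toeplitzMatrix h n).mulVec fun i => w (i + 1) := by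
  simp only [dotProduct_toeplitzMatrix_mulVec, toeplitzForm, sum_Icc_one_eq_sum_fin,
    Nat.dist_add_add_right]

lemma sum_sum_Icc_of_symm {M : Type*} [AddCommMonoid M] {f : ℕ → ℕ → M}
    (hf : ∀ i j, f i j = f j i) (n : ℕ) :
    ∑ i ∈ Icc 1 n, ∑ j ∈ Icc 1 n, f i j =
      ∑ i ∈ Icc 1 n, f i i + 2 • ∑ j ∈ Icc 1 n, ∑ i ∈ Ico 1 j, f i j := by
  induction n with
  | zero => simp
  | succ n ih =>
    have hrow : ∑ j ∈ Icc 1 n, f (n + 1) j = ∑ i ∈ Icc 1 n, f i (n + 1) :=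
      sum_congr rfl fun j _ => hf _ _
    simp only [sum_Icc_succ_top (Nat.le_add_left 1 n), sum_add_distrib, ih, hrow,
      Ico_add_one_right_eq_Icc, smul_add, two_smul]
    abel

lemma sum_Icc_lag_eq_sum_pairs {M : Type*} [AddCommMonoid M] (f : ℕ → ℕ → M) (n : ℕ) :
    ∑ k ∈ Icc 1 (n - 1), ∑ m ∈ Icc k (n - 1), f (m - k + 1) (m + 1) =
      ∑ j ∈ Icc 1 n, ∑ i ∈ Ico 1 j, f i j := by
  rw [sum_sigma', sum_sigma']
  refine sum_nbij' (fun p => ⟨p.2 + 1, p.2 - p.1 + 1⟩) (fun q => ⟨q.1 - q.2, q.1 - 1⟩)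
    ?_ ?_ ?_ ?_ fun _ _ => rfl
  all_goals
    rintro ⟨a, b⟩ hab
    simp only [mem_sigma, mem_Icc, mem_Ico, Sigma.mk.injEq, heq_eq_eq] at hab ⊢
    omega

lemma toeplitzForm_eq_sum_lag {R : Type*} [CommSemiring R] (h : ℕ → R) (n : ℕ) (w : ℕ → R) :
    toeplitzForm h n w = h 0 * ∑ m ∈ Icc 1 n, w m ^ 2 +
      2 * ∑ k ∈ Icc 1 (n - 1), h k * ∑ m ∈ Icc k (n - 1), w (m - k + 1) * w (m + 1) := by
  have hlag : ∀ k ∈ Icc 1 (n - 1), ∀ m ∈ Icc k (n - 1),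
      h k * (w (m - k + 1) * w (m + 1)) =
        w (m - k + 1) * w (m + 1) * h (Nat.dist (m - k + 1) (m + 1)) := by
    intro k _ m hm
    have hdist : Nat.dist (m - k + 1) (m + 1) = k := by
      have := (mem_Icc.mp hm).1
      simp only [Nat.dist]
      omega
    rw [hdist, mul_comm]
  rw [toeplitzForm, sum_sum_Icc_of_symm (fun i j => by rw [Nat.dist_comm, mul_comm (w i)]),
    ← sum_Icc_lag_eq_sum_pairs (fun i j => w i * w j * h (Nat.dist i j)), nsmul_eq_mul]
  simp only [Nat.dist_self, mul_sum]
  congr 1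
  · exact sum_congr rfl fun i _ => by ring
  · exact sum_congr rfl fun k hk => sum_congr rfl fun m hm => by rw [hlag k hk m hm, Nat.cast_two]

end ToeplitzForm

section CumulantExpansion

open Filter Topology Finset Asymptotics

/-- The extension of `Sfun` to complex arguments. -/
noncomputable def complexSfun (H : ℕ → ℝ) (n : ℕ) (θ : ℕ → ℂ) : ℂ :=
  (∑ m ∈ Icc 1 n, (Complex.exp (θ m) - 1)) +
    ∑ k ∈ Icc 1 (n - 1), (H k : ℂ) *
      ∑ m ∈ Icc k (n - 1),
        (Complex.exp (θ (m - k + 1)) - 1) *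
          Complex.exp (∑ i ∈ Icc (m - k + 2) m, θ i) * (Complex.exp (θ (m + 1)) - 1)

lemma complexSfun_ofReal (H : ℕ → ℝ) (n : ℕ) (θ : ℕ → ℝ) :
    complexSfun H n (fun i => θ i) = (Sfun H n θ : ℂ) := by
  simp [complexSfun, Sfun]

lemma differentiable_complexSfun_mul (H : ℕ → ℝ) (n : ℕ) (w : ℕ → ℂ) :
    Differentiable ℂ fun z : ℂ => complexSfun H n fun i => z * w i := by
  unfold complexSfun
  fun_prop

lemma tendsto_exp_mul_sub_taylor_div_pow (n : ℕ) (a : ℂ) :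
    Tendsto (fun ε : ℂ =>
        (Complex.exp (ε * a) - ∑ k ∈ range n, (ε * a) ^ k / k.factorial) / ε ^ n)
      (𝓝[≠] 0) (𝓝 (a ^ n / n.factorial)) := by
  have hε : Tendsto (fun ε : ℂ => ε * a) (𝓝[≠] 0) (𝓝 0) :=
    ((continuous_mul_const a).tendsto' 0 0 (zero_mul a)).mono_left nhdsWithin_le_nhds
  have hbound : (fun ε : ℂ => (ε * a) ^ n) =O[𝓝[≠] 0] fun ε => ε ^ n := by
    simpa only [mul_pow, mul_comm] using isBigO_const_mul_self (a ^ n) (fun ε : ℂ => ε ^ n) _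
  have hrem := (((Complex.exp_sub_sum_range_succ_isLittleO_pow n).comp_tendsto hε).trans_isBigO
    hbound).tendsto_div_nhds_zero.add_const (a ^ n / (n.factorial : ℂ))
  rw [zero_add] at hrem
  refine hrem.congr' ?_
  filter_upwards [self_mem_nhdsWithin] with ε (hε : ε ≠ 0)
  simp only [Function.comp_apply, sum_range_succ]
  field_simp
  ring

lemma tendsto_exp_mul_sub_one_div (a : ℂ) :
    Tendsto (fun ε : ℂ => (Complex.exp (ε * a) - 1) / ε) (𝓝[≠] 0) (𝓝 a) := by
  simpa using tendsto_exp_mul_sub_taylor_div_pow 1 a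

lemma tendsto_exp_mul_sub_one_sub_div_sq (a : ℂ) :
    Tendsto (fun ε : ℂ => (Complex.exp (ε * a) - 1 - ε * a) / ε ^ 2) (𝓝[≠] 0)
      (𝓝 (a ^ 2 / 2)) := by
  simpa [sum_range_succ, sub_sub] using tendsto_exp_mul_sub_taylor_div_pow 2 a

lemma tendsto_exp_sub_one_mul_exp_mul_exp_sub_one_div_sq (a b c : ℂ) :
    Tendsto (fun ε : ℂ =>
        (Complex.exp (ε * a) - 1) * Complex.exp (ε * b) * (Complex.exp (ε * c) - 1) / ε ^ 2)
      (𝓝[≠] 0) (𝓝 (a * c)) := by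
  have hb : Tendsto (fun ε : ℂ => Complex.exp (ε * b)) (𝓝[≠] 0) (𝓝 1) :=
    (Continuous.tendsto' (by fun_prop) _ _ (by simp)).mono_left nhdsWithin_le_nhds
  have h := ((tendsto_exp_mul_sub_one_div a).mul hb).mul (tendsto_exp_mul_sub_one_div c)
  rw [mul_one] at h
  exact h.congr fun ε => by ring

theorem tendsto_complexSfun_sub_div_sq {H : ℕ → ℝ} (hH0 : H 0 = 1) (n : ℕ) (w : ℕ → ℂ) :
    Tendsto (fun ε : ℂ =>
        (complexSfun H n (fun i => ε * w i) - ε * ∑ i ∈ Icc 1 n, w i) / ε ^ 2)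
      (𝓝[≠] 0) (𝓝 (toeplitzForm (fun k => (H k : ℂ)) n w / 2)) := by
  have hlim := (tendsto_finsetSum (Icc 1 n) fun m _ =>
      tendsto_exp_mul_sub_one_sub_div_sq (w m)).add
    (tendsto_finsetSum (Icc 1 (n - 1)) fun k _ =>
      (tendsto_finsetSum (Icc k (n - 1)) fun m _ =>
        tendsto_exp_sub_one_mul_exp_mul_exp_sub_one_div_sq (w (m - k + 1))
          (∑ i ∈ Icc (m - k + 2) m, w i) (w (m + 1))).const_mul (H k : ℂ))
  convert hlim using 2 with ε
  · simp only [complexSfun, mul_sum, sum_div, add_sub_right_comm, ← sum_sub_distrib, add_div,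
      mul_div_assoc]
  · rw [toeplitzForm_eq_sum_lag, hH0, ← sum_div]
    push_cast
    ring

end CumulantExpansion

section ComplexMGF

open Filter Topology

variable {Ω : Type*} {mΩ : MeasurableSpace Ω} {μ : Measure Ω} {Z : Ω → ℝ}

lemma complexMGF_eq_of_differentiable {F : ℂ → ℂ} (hF : Differentiable ℂ F)
    (hint : ∀ t : ℝ, Integrable (fun ω => Real.exp (t * Z ω)) μ)
    (hmgf : ∀ t : ℝ, (mgf Z μ t : ℂ) = F t) : complexMGF Z μ = F := by
  have hset : integrableExpSet Z μ = Set.univ := Set.eq_univ_of_forall hint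
  have hZ : AnalyticOnNhd ℂ (complexMGF Z μ) Set.univ := by
    simpa [hset] using analyticOnNhd_complexMGF (X := Z) (μ := μ)
  have hreal : Tendsto ((↑) : ℝ → ℂ) (𝓝[≠] 0) (𝓝[≠] 0) :=
    Complex.continuous_ofReal.continuousWithinAt.tendsto_nhdsWithin fun x hx => by simpa using hx
  refine hZ.eq_of_frequently_eq (hF.differentiableOn.analyticOnNhd isOpen_univ)
    (hreal.frequently (.of_forall fun t => ?_))
  rw [complexMGF_ofReal, hmgf]

lemma complexMGF_const_mul_add_const (c d : ℝ) (z : ℂ) :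
    complexMGF (fun ω => c * Z ω + d) μ z = Complex.exp (z * d) * complexMGF Z μ (z * c) := by
  simp only [complexMGF, ← integral_const_mul, ← Complex.exp_add]
  congr with ω
  push_cast
  ring_nf

end ComplexMGF

section StandardizedLimit

open Filter Topology

variable {α : Type*} {L : Filter α} {Ω : α → Type*} {mΩ : ∀ l, MeasurableSpace (Ω l)}
  {μ : ∀ l, Measure (Ω l)} {Z : ∀ l, Ω l → ℝ}

lemma tendsto_div_sqrt_nhdsNE_zero {r : α → ℝ} (hr : Tendsto r L atTop) {z : ℂ} (hz : z ≠ 0) :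
    Tendsto (fun l => z / (√(r l) : ℂ)) L (𝓝[≠] 0) := by
  refine tendsto_nhdsWithin_iff.mpr ⟨?_, ?_⟩
  · have hinv : Tendsto (fun l => (((√(r l))⁻¹ : ℝ) : ℂ)) L (𝓝 (0 : ℝ)) :=
      ((Real.tendsto_sqrt_atTop.comp hr).inv_tendsto_atTop).ofReal
    simpa [div_eq_mul_inv] using hinv.const_mul z
  · filter_upwards [hr.eventually_gt_atTop 0] with l hl
    exact div_ne_zero hz (Complex.ofReal_ne_zero.mpr (Real.sqrt_ne_zero'.mpr hl))

theorem tendsto_complexMGF_standardized [∀ l, IsProbabilityMeasure (μ l)] {r : α → ℝ}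
    (hr : Tendsto r L atTop) {κ : ℂ → ℂ} {a : ℝ} {b : ℂ}
    (hZ : ∀ᶠ l in L, ∀ z, complexMGF (Z l) (μ l) z = Complex.exp (r l * κ z))
    (hκ : Tendsto (fun ε => (κ ε - ε * a) / ε ^ 2) (𝓝[≠] 0) (𝓝 b)) (z : ℂ) :
    Tendsto (fun l => complexMGF (fun ω => (Z l ω - r l * a) / √(r l)) (μ l) z) L
      (𝓝 (Complex.exp (z ^ 2 * b))) := by
  rcases eq_or_ne z 0 with rfl | hz
  · simp [complexMGF, tendsto_const_nhds]
  refine ((hκ.comp (tendsto_div_sqrt_nhdsNE_zero hr hz)).const_mul (z ^ 2)).cexp.congr' ?_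
  filter_upwards [hZ, hr.eventually_gt_atTop 0] with l hl hrl
  have hs : (√(r l) : ℂ) ≠ 0 := Complex.ofReal_ne_zero.mpr (Real.sqrt_ne_zero'.mpr hrl)
  have hrs : (r l : ℂ) = (√(r l) : ℂ) ^ 2 := by
    rw [← Complex.ofReal_pow, Real.sq_sqrt hrl.le]
  have haffine : (fun ω => (Z l ω - r l * a) / √(r l)) =
      fun ω => (√(r l))⁻¹ * Z l ω + -(r l * a / √(r l)) := by
    ext ω
    ring
  rw [haffine, complexMGF_const_mul_add_const, hl, ← Complex.exp_add, Function.comp_apply]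
  congr 1
  push_cast
  rw [hrs, ← div_eq_mul_inv]
  field_simp
  ring

lemma nonneg_of_tendsto_complexMGF_I [L.NeBot] [∀ l, IsProbabilityMeasure (μ l)] {b : ℝ}
    (h : Tendsto (fun l => complexMGF (Z l) (μ l) Complex.I) L (𝓝 (Complex.exp (-b)))) :
    0 ≤ b := by
  have hle : ‖Complex.exp (-b)‖ ≤ 1 :=
    le_of_tendsto h.norm (.of_forall fun l => norm_complexMGF_le_mgf.trans (by simp))
  simpa [Complex.norm_exp] using hle

lemma tendsto_cgf_of_tendsto_complexMGF {t b : ℝ}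
    (h : Tendsto (fun l => complexMGF (Z l) (μ l) t) L (𝓝 (Complex.exp b))) :
    Tendsto (fun l => cgf (Z l) (μ l) t) L (𝓝 b) := by
  simp only [complexMGF_ofReal, ← Complex.ofReal_exp, tendsto_ofReal_iff] at h
  simpa [cgf] using h.log (Real.exp_ne_zero b)

end StandardizedLimit

section Gaussian

open Filter Topology Matrix
open scoped BoundedContinuousFunction

lemma mgf_inner_multivariateGaussian {ι : Type*} [Fintype ι] [DecidableEq ι]
    (m : EuclideanSpace ℝ ι) {S : Matrix ι ι ℝ} (hS : S.PosSemidef) (θ : EuclideanSpace ℝ ι)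
    (t : ℝ) :
    mgf (inner ℝ θ) (multivariateGaussian m S) t =
      Real.exp (t * inner ℝ θ m + t ^ 2 * (θ.ofLp ⬝ᵥ S *ᵥ θ.ofLp) / 2) := by
  have hmean : (multivariateGaussian m S)[innerSL ℝ θ] = inner ℝ θ m := by
    rw [(innerSL ℝ θ).integral_comp_id_comm IsGaussian.integrable_id]
    simp
  have hvar : Var[innerSL ℝ θ; multivariateGaussian m S] = θ.ofLp ⬝ᵥ S *ᵥ θ.ofLp := by
    rw [← covarianceBilin_multivariateGaussian hS (μ := m),
      covarianceBilin_self IsGaussian.memLp_two_id]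
    rfl
  have hnonneg : 0 ≤ θ.ofLp ⬝ᵥ S *ᵥ θ.ofLp := hS.dotProduct_mulVec_nonneg θ.ofLp
  have hmgf := mgf_gaussianReal
    (IsGaussian.map_eq_gaussianReal (μ := multivariateGaussian m S) (innerSL ℝ θ)) t
  rw [hmean, hvar, Real.coe_toNNReal _ hnonneg] at hmgf
  rw [mul_comm t, mul_comm (t ^ 2)]
  exact hmgf

/-- The centered Gaussian law with covariance matrix `S` as a measure on `ι → ℝ`; Mathlib's
`multivariateGaussian` lives on `EuclideanSpace ℝ ι`. -/
noncomputable def centeredGaussian {ι : Type*} [Fintype ι] [DecidableEq ι] (S : Matrix ι ι ℝ) :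
    Measure (ι → ℝ) :=
  (multivariateGaussian 0 S).map WithLp.ofLp

variable {ι : Type*} [Fintype ι] [DecidableEq ι] {S : Matrix ι ι ℝ}

instance : IsProbabilityMeasure (centeredGaussian S) :=
  Measure.isProbabilityMeasure_map (by fun_prop)

lemma integral_exp_sum_mul_centeredGaussian (hS : S.PosSemidef) (θ : ι → ℝ) :
    ∫ x, Real.exp (∑ i, θ i * x i) ∂centeredGaussian S = Real.exp ((θ ⬝ᵥ S *ᵥ θ) / 2) := by
  rw [centeredGaussian, integral_map (by fun_prop)
    (Continuous.aestronglyMeasurable (by fun_prop))]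
  simpa [mgf, PiLp.inner_apply, mul_comm] using
    mgf_inner_multivariateGaussian 0 hS (WithLp.toLp 2 θ) 1

variable {Ω : ℕ → Type*} {mΩ : ∀ l, MeasurableSpace (Ω l)} {μ : ∀ l, Measure (Ω l)}
  [∀ l, IsProbabilityMeasure (μ l)]

lemma tendsto_integral_of_tendsto_charFun {E : Type*} [NormedAddCommGroup E]
    [InnerProductSpace ℝ E] [FiniteDimensional ℝ E] [MeasurableSpace E] [BorelSpace E]
    {V : ∀ l, Ω l → E} {ν : Measure E} [IsProbabilityMeasure ν]
    (hV : ∀ᶠ l in atTop, AEMeasurable (V l) (μ l))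
    (h : ∀ t, Tendsto (fun l => charFun ((μ l).map (V l)) t) atTop (𝓝 (charFun ν t)))
    (f : E →ᵇ ℝ) :
    Tendsto (fun l => ∫ ω, f (V l ω) ∂μ l) atTop (𝓝 (∫ x, f x ∂ν)) := by
  obtain ⟨N, hN⟩ := eventually_atTop.mp hV
  have hmeas (l : ℕ) : AEMeasurable (V (l + N)) (μ (l + N)) := hN _ (Nat.le_add_left N l)
  let law (l : ℕ) : ProbabilityMeasure E :=
    ⟨(μ (l + N)).map (V (l + N)), Measure.isProbabilityMeasure_map (hmeas l)⟩
  have hlaw : Tendsto law atTop (𝓝 ⟨ν, inferInstance⟩) :=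
    ProbabilityMeasure.tendsto_of_tendsto_charFun fun t => (tendsto_add_atTop_iff_nat N).mpr (h t)
  rw [← tendsto_add_atTop_iff_nat N]
  refine (ProbabilityMeasure.tendsto_iff_forall_integral_tendsto.mp hlaw f).congr fun l => ?_
  exact integral_map (hmeas l) f.continuous.aestronglyMeasurable

theorem tendsto_integral_centeredGaussian (hS : S.PosSemidef) {V : ∀ l, Ω l → ι → ℝ}
    (hV : ∀ᶠ l in atTop, ∀ i, AEMeasurable (fun ω => V l ω i) (μ l))
    (h : ∀ θ : ι → ℝ, Tendsto (fun l => complexMGF (fun ω => ∑ i, θ i * V l ω i) (μ l) Complex.I)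
      atTop (𝓝 (Complex.exp (-((θ ⬝ᵥ S *ᵥ θ) / 2 : ℝ)))))
    (f : (ι → ℝ) →ᵇ ℝ) :
    Tendsto (fun l => ∫ ω, f (V l ω) ∂μ l) atTop (𝓝 (∫ x, f x ∂centeredGaussian S)) := by
  let ofLp : C(EuclideanSpace ℝ ι, ι → ℝ) := ⟨WithLp.ofLp, by fun_prop⟩
  have hmeas : ∀ᶠ l in atTop, AEMeasurable (fun ω => WithLp.toLp 2 (V l ω)) (μ l) :=
    hV.mono fun l hl =>
      (WithLp.measurable_toLp 2 _).comp_aemeasurable (aemeasurable_pi_lambda _ hl)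
  have hchar (t : EuclideanSpace ℝ ι) :
      Tendsto (fun l => charFun ((μ l).map fun ω => WithLp.toLp 2 (V l ω)) t) atTop
        (𝓝 (charFun (multivariateGaussian 0 S) t)) := by
    have hlim : charFun (multivariateGaussian 0 S) t =
        Complex.exp (-((t.ofLp ⬝ᵥ S *ᵥ t.ofLp) / 2 : ℝ)) := by
      simp [charFun_multivariateGaussian hS]
    rw [hlim]
    refine (h t.ofLp).congr' (hmeas.mono fun l hl => ?_)
    beta_reduce
    rw [charFun_apply, integral_map hl (by fun_prop), complexMGF]
    simp [PiLp.inner_apply, mul_comm]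
  rw [centeredGaussian, integral_map (by fun_prop) f.continuous.aestronglyMeasurable]
  exact tendsto_integral_of_tendsto_charFun hmeas hchar (f.compContinuous ofLp)

end Gaussian

section QueueLength

open Filter Topology Finset

/-- `Y 1, …, Y n` have the finite joint moment generating function `exp (r * S_n(θ))` of the queue
lengths sampled from an M/G/∞ system with offered load `r`. -/
def HasQueueMGF {Ω : Type*} [MeasurableSpace Ω] (H : ℕ → ℝ) (n : ℕ) (r : ℝ)
    (Y : ℕ → Ω → ℝ) (μ : Measure Ω) : Prop :=
  ∀ θ : ℕ → ℝ, Integrable (fun ω => Real.exp (∑ i ∈ Icc 1 n, θ i * Y i ω)) μ ∧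
    ∫ ω, Real.exp (∑ i ∈ Icc 1 n, θ i * Y i ω) ∂μ = Real.exp (r * Sfun H n θ)

namespace HasQueueMGF

variable {H : ℕ → ℝ} {n : ℕ}

section SingleSystem

variable {Ω : Type*} {mΩ : MeasurableSpace Ω} {μ : Measure Ω} {r : ℝ} {Y : ℕ → Ω → ℝ}

lemma aemeasurable (h : HasQueueMGF H n r Y μ) {i : ℕ} (hi : i ∈ Icc 1 n) :
    AEMeasurable (Y i) μ := by
  have hsingle := (h (Pi.single i 1)).1.aemeasurable
  simp only [Pi.single_apply, ite_mul, one_mul, zero_mul, sum_ite_eq', hi, if_true] at hsingle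
  exact Real.aemeasurable_of_aemeasurable_exp hsingle

lemma complexMGF_sum_mul (h : HasQueueMGF H n r Y μ) (θ : ℕ → ℝ) (z : ℂ) :
    complexMGF (fun ω => ∑ i ∈ Icc 1 n, θ i * Y i ω) μ z =
      Complex.exp (r * complexSfun H n fun i => z * θ i) := by
  have hsum (t : ℝ) (ω : Ω) :
      t * ∑ i ∈ Icc 1 n, θ i * Y i ω = ∑ i ∈ Icc 1 n, t * θ i * Y i ω := by
    simp only [mul_sum, mul_assoc]
  refine congrFun (complexMGF_eq_of_differentiable
    ((differentiable_complexSfun_mul H n _).const_mul _).cexp (fun t => ?_) fun t => ?_) z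
  · simpa only [hsum] using (h fun i => t * θ i).1
  · simp only [mgf, hsum]
    rw [(h fun i => t * θ i).2, Complex.ofReal_exp, Complex.ofReal_mul, ← complexSfun_ofReal]
    simp only [Complex.ofReal_mul]

end SingleSystem

theorem tendsto_complexMGF {α : Type*} {L : Filter α} {Ω : α → Type*}
    {mΩ : ∀ l, MeasurableSpace (Ω l)} {μ : ∀ l, Measure (Ω l)} [∀ l, IsProbabilityMeasure (μ l)]
    {r : α → ℝ} {X : ∀ l, ℕ → Ω l → ℝ} (hX : ∀ᶠ l in L, HasQueueMGF H n (r l) (X l) (μ l))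
    (hr : Tendsto r L atTop) (hH0 : H 0 = 1) (θ : ℕ → ℝ) (z : ℂ) :
    Tendsto (fun l => complexMGF (fun ω => ∑ i ∈ Icc 1 n, θ i * ((X l i ω - r l) / √(r l)))
      (μ l) z) L (𝓝 (Complex.exp (z ^ 2 * (toeplitzForm H n θ / 2 : ℝ)))) := by
  have hexpand := tendsto_complexSfun_sub_div_sq hH0 n fun i => (θ i : ℂ)
  have hform : toeplitzForm (fun k => (H k : ℂ)) n (fun i => (θ i : ℂ)) / 2 =
      (toeplitzForm H n θ / 2 : ℝ) := by
    simp [toeplitzForm]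
  rw [hform, ← Complex.ofReal_sum] at hexpand
  refine (tendsto_complexMGF_standardized hr
    (hX.mono fun l hl => hl.complexMGF_sum_mul θ) hexpand z).congr fun l => ?_
  congr with ω
  rw [mul_sum, ← sum_sub_distrib, sum_div]
  exact sum_congr rfl fun i _ => by ring

end HasQueueMGF

lemma exists_nat_extension {n : ℕ} {β : Type*} [Nonempty β] (θ : Fin n → β) :
    ∃ w : ℕ → β, (fun i : Fin n => w (i + 1)) = θ :=
  ⟨Function.extend (fun i : Fin n => (i : ℕ) + 1) θ fun _ => Classical.arbitrary β,
    funext fun i => (Nat.succ_injective.comp Fin.val_injective).extend_apply θ _ i⟩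

theorem stmt3_general {Ω : ℕ → Type*} {mΩ : ∀ l, MeasurableSpace (Ω l)} {μ : ∀ l, Measure (Ω l)}
    [∀ l, IsProbabilityMeasure (μ l)] {r : ℕ → ℝ} (hr : Tendsto r atTop atTop) {n : ℕ}
    {H : ℕ → ℝ} (hH0 : H 0 = 1) {X : ∀ l, ℕ → Ω l → ℝ}
    (hX : ∀ᶠ l in atTop, HasQueueMGF H n (r l) (X l) (μ l)) :
    (∀ θ : ℕ → ℝ,
      Tendsto (fun l =>
          Real.log (∫ ω, Real.exp (∑ i ∈ Icc 1 n, θ i * ((X l i ω - r l) / √(r l))) ∂μ l))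
        atTop (𝓝 ((1 / 2) * ∑ i ∈ Icc 1 n, ∑ j ∈ Icc 1 n, θ i * θ j * H (Nat.dist i j)))) ∧
    ∃ μG : Measure (Fin n → ℝ), IsProbabilityMeasure μG ∧
      (∀ θ : Fin n → ℝ,
        ∫ x, Real.exp (∑ i, θ i * x i) ∂μG =
          Real.exp ((1 / 2) * ∑ i : Fin n, ∑ j : Fin n, θ i * θ j * H (Nat.dist i j))) ∧
      ∀ f : BoundedContinuousFunction (Fin n → ℝ) ℝ,
        Tendsto (fun l => ∫ ω, f (fun i => (X l (i + 1) ω - r l) / √(r l)) ∂μ l)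
          atTop (𝓝 (∫ x, f x ∂μG)) := by
  have hlim := HasQueueMGF.tendsto_complexMGF hX hr hH0
  have hchar (θ : ℕ → ℝ) := hlim θ Complex.I
  simp only [Complex.I_sq, neg_one_mul] at hchar
  have hS : (toeplitzMatrix H n).PosSemidef := by
    refine .of_dotProduct_mulVec_nonneg (toeplitzMatrix_isHermitian H n) fun θ => ?_
    obtain ⟨w, rfl⟩ := exists_nat_extension θ
    have hnonneg := nonneg_of_tendsto_complexMGF_I (hchar w)
    rw [toeplitzForm_eq_dotProduct_mulVec] at hnonneg
    rw [star_trivial]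
    linarith
  refine ⟨fun θ => ?_, centeredGaussian (toeplitzMatrix H n), inferInstance, fun θ => ?_,
    tendsto_integral_centeredGaussian hS ?_ fun θ => ?_⟩
  · have hone : Tendsto (fun l => complexMGF
        (fun ω => ∑ i ∈ Icc 1 n, θ i * ((X l i ω - r l) / √(r l))) (μ l) (1 : ℝ)) atTop
        (𝓝 (Complex.exp (toeplitzForm H n θ / 2 : ℝ))) := by
      simpa using hlim θ 1
    simpa [cgf, mgf, toeplitzForm, div_eq_inv_mul] using tendsto_cgf_of_tendsto_complexMGF hone
  · rw [integral_exp_sum_mul_centeredGaussian hS, dotProduct_toeplitzMatrix_mulVec,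
      one_div_mul_eq_div]
  · filter_upwards [hX] with l hl i
    have hXi := hl.aemeasurable (i := i + 1) (by simp)
    fun_prop
  · obtain ⟨w, rfl⟩ := exists_nat_extension θ
    simpa only [sum_Icc_one_eq_sum_fin, toeplitzForm_eq_dotProduct_mulVec] using hchar w

end QueueLength

/-- Gaussian approximation to the finite-dimensional distributions of the
M/G/∞ queue-length process as the arrival rate grows: the log-MGFs of the normalized
vectors converge to the Gaussian one, and the normalized vectors converge in distribution
to the centered Gaussian law with covariance matrix `Σ(H)_{ij} = H_{|i−j|}`. -/
theorem stmt3 {Ω : Type*} [MeasureSpace Ω] [IsProbabilityMeasure (ℙ : Measure Ω)]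
    (ρ : ℝ) (hρ : 0 < ρ) (n : ℕ) (hn : 1 ≤ n) (H : ℕ → ℝ) (hH0 : H 0 = 1)
    (X : ℕ → ℕ → Ω → ℝ)
    (hmgf : ∀ l : ℕ, 1 ≤ l → ∀ θ : ℕ → ℝ,
      Integrable (fun ω => Real.exp (∑ i ∈ Finset.Icc 1 n, θ i * X l i ω)) ∧
        ∫ ω, Real.exp (∑ i ∈ Finset.Icc 1 n, θ i * X l i ω) =
          Real.exp ((l : ℝ) * ρ * Sfun H n θ)) :
    (∀ θ : ℕ → ℝ,
      Filter.Tendsto (fun l : ℕ =>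
          Real.log (∫ ω, Real.exp (∑ i ∈ Finset.Icc 1 n,
            θ i * ((X l i ω - (l : ℝ) * ρ) / Real.sqrt ((l : ℝ) * ρ)))))
        Filter.atTop
        (nhds ((1 / 2) * ∑ i ∈ Finset.Icc 1 n, ∑ j ∈ Finset.Icc 1 n,
          θ i * θ j * H (Nat.dist i j)))) ∧
    ∃ μG : Measure (Fin n → ℝ), IsProbabilityMeasure μG ∧
      (∀ θ : Fin n → ℝ,
        ∫ x, Real.exp (∑ i, θ i * x i) ∂μG =
          Real.exp ((1 / 2) * ∑ i : Fin n, ∑ j : Fin n,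
            θ i * θ j * H (Nat.dist (i : ℕ) (j : ℕ)))) ∧
      ∀ f : BoundedContinuousFunction (Fin n → ℝ) ℝ,
        Filter.Tendsto (fun l : ℕ =>
            ∫ ω, f (fun i : Fin n =>
              (X l ((i : ℕ) + 1) ω - (l : ℝ) * ρ) / Real.sqrt ((l : ℝ) * ρ)))
          Filter.atTop (nhds (∫ x, f x ∂μG)) :=
  stmt3_general (tendsto_natCast_atTop_atTop.atTop_mul_const hρ) hH0
    (Filter.eventually_atTop.mpr ⟨1, hmgf⟩)
end

section
/- Fix β > 0 and a positive integer ℓ with ℓ ≥ ⌊β⌋+1, where ⌊β⌋ is the largest integer strictly smaller than β. There is a constant C₂ = C₂(ℓ) depending on ℓ only (the constant from the ℓ¹-bound on the local polynomial weights) such that the following holds. Let G be a distribution function on [0,∞) belonging to H_β(L, I) with I = [x₀−d, x₀+d], let λ > 0, μ⁻¹ := ∫₀^∞(1−G(x))dx ∈ (0,∞), ρ := λ/μ, and define R(t) := ρ² + λ∫_t^∞ (1−G(x)) dx for t ≥ 0. Suppose h ≥ (ℓ+2)δ/2 and D_{x₀} ⊆ I, and let {a_k(x₀) : k ∈ M_{D_{x₀}}}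 be the minimizer of problem (P_{x₀}). Then |Σ_{k∈M_{D_{x₀}}} a_k(x₀) R(kδ) − R′(x₀)| ≤ C₂ λ L h^{β}. -/
open MeasureTheory
open scoped Classical

/-- `⌊β⌋`: the largest integer strictly smaller than `β` (for `β > 0`). -/
noncomputable def flr (β : ℝ) : ℕ := ⌈β⌉₊ - 1

/-- The Hölder class `H_β(L, I)`: `⌊β⌋` times continuously differentiable on `I`, with the
`⌊β⌋`-th derivative Hölder continuous of exponent `β − ⌊β⌋` and constant `L`. -/
def HolderClass (β L : ℝ) (I : Set ℝ) (G : ℝ → ℝ) : Prop :=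
  ContDiffOn ℝ (flr β) G I ∧
    ∀ x ∈ I, ∀ y ∈ I,
      |iteratedDerivWithin (flr β) G I x - iteratedDerivWithin (flr β) G I y| ≤
        L * |x - y| ^ (β - (flr β : ℝ))

/-- The segment `D_x` from the paper. -/
noncomputable def Dseg (T δ h x : ℝ) : Set ℝ :=
  if x ≤ h then Set.Icc 0 (2 * h)
  else if x ≤ T - δ - h then Set.Icc (x - h) (x + h)
  else Set.Icc (T - δ - 2 * h) (T - δ)

/-- `M_{D_x} = {k ∈ {1,…,n} : kδ ∈ D_x}`. -/
noncomputable def Mset (n : ℕ) (T δ h x : ℝ) : Finset ℕ :=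
  (Finset.Icc 1 n).filter fun k => (k : ℝ) * δ ∈ Dseg T δ h x

/-- The constraints of the optimization problem `(P_x)`. -/
def Feasible (ℓ n : ℕ) (T δ h x : ℝ) (a : ℕ → ℝ) : Prop :=
  (∑ k ∈ Mset n T δ h x, a k) = 0 ∧
    ∀ j ∈ Finset.Icc 1 ℓ,
      (∑ k ∈ Mset n T δ h x, a k * ((k : ℝ) * δ) ^ j) = (j : ℝ) * x ^ (j - 1)

/-- The covariance function `R(t) = ρ² + λ ∫_t^∞ (1−G(x)) dx` of the queue-length process
(shifted by the squared mean), with `ρ = λ/μ`. -/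
noncomputable def Rcov (G : ℝ → ℝ) (lam μ : ℝ) (t : ℝ) : ℝ :=
  (lam / μ) ^ 2 + lam * ∫ x in Set.Ioi t, (1 - G x)
/-!
The weights differentiate polynomials of degree at most `ℓ` exactly, so the bias only sees the
Taylor remainder of `R` at `x₀`, which is at most `λL(mδ)^{β+1}` at the nodes, `m` being the number
of nodes. The `ℓ¹`-norm of the weights is at most `C/(mδ)`: by Cauchy–Schwarz and minimality it is
enough to exhibit competing weights of size `O(1/(m²δ))`. These are obtained by splitting the grid
into about `m/(ℓ+1)` interleaved progressions of `ℓ+1` nodes, each of which spans a length of order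
`mδ`, and averaging their Lagrange differentiation rules. If `m ≤ ℓ+1`, the minimizer is the only
feasible point.
-/

open Polynomial

section DerivRule

variable {ι F : Type*} [Field F] {s : Finset ι} {v a b : ι → F} {x : F} {N : ℕ}

/-- A numerical differentiation rule of order `N`: the weights `a` at the nodes `v i`, `i ∈ s`,
reproduce the derivative at `x` of every polynomial of degree less than `N`. For the nodes `kδ`,
`k ∈ M_{D_x}`, and `N = ℓ + 1` these are the constraints of `(P_x)`. -/
def IsDerivRule (s : Finset ι) (v a : ι → F) (x : F) (N : ℕ) : Prop :=
  ∀ P : F[X], P.natDegree < N → ∑ i ∈ s, a i * P.eval (v i) = P.derivative.eval x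

namespace IsDerivRule

lemma iff_pow :
    IsDerivRule s v a x N ↔ ∀ j < N, ∑ i ∈ s, a i * v i ^ j = j * x ^ (j - 1) := by
  constructor
  · intro h j hj
    simpa only [eval_pow, eval_X, derivative_X_pow, eval_mul, eval_C] using
      h (X ^ j) (by rwa [natDegree_X_pow])
  · intro h P hP
    have hderiv : P.derivative.eval x =
        ∑ j ∈ Finset.range N, P.coeff j * ((j : F) * x ^ (j - 1)) := by
      conv_lhs => rw [P.as_sum_range_C_mul_X_pow' hP]
      simp only [derivative_sum, derivative_C_mul, derivative_X_pow, eval_finsetSum, eval_mul,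
        eval_C, eval_pow, eval_X]
    rw [hderiv]
    simp only [eval_eq_sum_range' hP, Finset.mul_sum]
    rw [Finset.sum_comm]
    refine Finset.sum_congr rfl fun j hj => ?_
    rw [← h j (Finset.mem_range.1 hj), Finset.mul_sum]
    exact Finset.sum_congr rfl fun i _ => by ring

lemma mono {M : ℕ} (h : IsDerivRule s v a x N) (hMN : M ≤ N) : IsDerivRule s v a x M :=
  fun P hP => h P (hP.trans_le hMN)

lemma one_lt_card (h : IsDerivRule s v a x N) (hN : 2 ≤ N) : 1 < s.card := by
  by_contra! hcard
  obtain ⟨y, hy⟩ : ∃ y, ∀ i ∈ s, v i = y := by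
    rcases s.eq_empty_or_nonempty with rfl | ⟨i₀, hi₀⟩
    · simp
    · exact ⟨v i₀, fun i hi => by rw [Finset.card_le_one.1 hcard i hi i₀ hi₀]⟩
  have hzero : ∑ i ∈ s, a i * (X - C y).eval (v i) = 0 :=
    Finset.sum_eq_zero fun i hi => by simp [hy i hi]
  have hone := h (X - C y) (by rw [natDegree_X_sub_C]; omega)
  rw [hzero] at hone
  simp at hone

lemma eqOn_of_card_le (hv : Set.InjOn v s) (ha : IsDerivRule s v a x N)
    (hb : IsDerivRule s v b x N) (hN : s.card ≤ N) : Set.EqOn a b s := by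
  intro i hi
  have weight_eq : ∀ c : ι → F, IsDerivRule s v c x N →
      c i = (Lagrange.basis s v i).derivative.eval x := by
    intro c hc
    have hdeg : (Lagrange.basis s v i).natDegree < N := by
      have := Finset.card_pos.2 ⟨i, hi⟩
      rw [Lagrange.natDegree_basis hv hi]
      omega
    rw [← hc _ hdeg, Finset.sum_eq_single_of_mem i hi, Lagrange.eval_basis_self hv hi, mul_one]
    intro j hj hji
    rw [Lagrange.eval_basis_of_ne hji.symm hj, mul_zero]
  rw [weight_eq a ha, weight_eq b hb]

lemma lagrange [DecidableEq ι] (hv : Set.InjOn v s) (x : F) :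
    IsDerivRule s v (fun i => (Lagrange.basis s v i).derivative.eval x) x s.card := by
  intro P hP
  have hdeg : P.degree < s.card := degree_le_natDegree.trans_lt (by exact_mod_cast hP)
  conv_rhs => rw [Lagrange.eq_interpolate hv hdeg]
  simp only [Lagrange.interpolate_apply, derivative_sum, derivative_C_mul, eval_finsetSum,
    eval_mul, eval_C]
  exact Finset.sum_congr rfl fun i _ => mul_comm _ _

lemma comp_affine (h : IsDerivRule s v a x N) {η : F} (hη : η ≠ 0) (y : F) :
    IsDerivRule s (fun i => η * v i + y) (fun i => a i / η) (η * x + y) N := by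
  intro P hP
  have hdeg : (P.comp (C η * X + C y)).natDegree < N :=
    calc _ ≤ P.natDegree * (C η * X + C y).natDegree := natDegree_comp_le
      _ ≤ P.natDegree * 1 := Nat.mul_le_mul_left _ natDegree_linear_le
      _ < N := by rwa [mul_one]
  have key : ∑ i ∈ s, a i * P.eval (η * v i + y) = η * P.derivative.eval (η * x + y) := by
    simpa [derivative_comp, eval_comp] using h _ hdeg
  simp only [div_mul_eq_mul_div, ← Finset.sum_div]
  rw [key, mul_div_cancel_left₀ _ hη]

end IsDerivRule

lemma sum_range_mul_eq_sum_sum {A : Type*} [AddCommMonoid A] (f : ℕ → A) (s N : ℕ) :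
    ∑ u ∈ Finset.range (s * N), f u =
      ∑ i ∈ Finset.range s, ∑ r ∈ Finset.range N, f (i + s * r) := by
  rw [Finset.sum_comm]
  induction N with
  | zero => simp
  | succ N ih =>
    rw [Nat.mul_succ, Finset.sum_range_add, ih, Finset.sum_range_succ]
    simp only [add_comm]

/-- The mean of `s` rules, the `i`-th of which has weights `w i r` at the nodes `i + s * r`,
`r < N`. The nodes of distinct rules are disjoint, so averaging divides each weight by `s`. -/
def stridedMean (s N : ℕ) (w : ℕ → ℕ → F) (k : ℕ) : F :=
  if k < s * N then w (k % s) (k / s) / s else 0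

lemma sum_stridedMean_mul {s N m : ℕ} (hsN : s * N ≤ m) (w : ℕ → ℕ → F) (f : ℕ → F) :
    ∑ k ∈ Finset.range m, stridedMean s N w k * f k =
      (∑ i ∈ Finset.range s, ∑ r ∈ Finset.range N, w i r * f (i + s * r)) / s := by
  rw [← Finset.sum_subset (Finset.range_subset_range.2 hsN), sum_range_mul_eq_sum_sum,
    Finset.sum_div]
  · refine Finset.sum_congr rfl fun i hi => ?_
    rw [Finset.sum_div]
    refine Finset.sum_congr rfl fun r hr => ?_
    rw [Finset.mem_range] at hi hr
    have hlt : i + s * r < s * N := by nlinarith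
    have hmod : (i + s * r) % s = i := by rw [Nat.add_mul_mod_self_left, Nat.mod_eq_of_lt hi]
    have hdiv : (i + s * r) / s = r := by
      rw [Nat.add_mul_div_left _ _ (by omega), Nat.div_eq_of_lt hi, zero_add]
    rw [stridedMean, if_pos hlt, hmod, hdiv, div_mul_eq_mul_div]
  · intro k _ hk
    rw [stridedMean, if_neg (by rwa [Finset.mem_range] at hk), zero_mul]

lemma IsDerivRule.stridedMean {s N m M : ℕ} {w : ℕ → ℕ → F} (hs : (s : F) ≠ 0)
    (hsN : s * N ≤ m)
    (hw : ∀ i < s, IsDerivRule (Finset.range N) (fun r => (s * r + i : F)) (w i) x M) :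
    IsDerivRule (Finset.range m) (fun k => (k : F)) (stridedMean s N w) x M := by
  intro P hP
  have hrule : ∀ i ∈ Finset.range s,
      ∑ r ∈ Finset.range N, w i r * P.eval ((i + s * r : ℕ) : F) = P.derivative.eval x := by
    intro i hi
    rw [← hw i (Finset.mem_range.1 hi) P hP]
    push_cast
    simp only [add_comm]
  rw [sum_stridedMean_mul hsN, Finset.sum_congr rfl hrule, Finset.sum_const, Finset.card_range,
    nsmul_eq_mul, mul_div_cancel_left₀ _ hs]

end DerivRule

section WeightBounds

lemma abs_stridedMean_le {s N : ℕ} {w : ℕ → ℕ → ℝ} {W : ℝ} (hW : 0 ≤ W)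
    (hw : ∀ i < s, ∀ r < N, |w i r| ≤ W) (k : ℕ) : |stridedMean s N w k| ≤ W / s := by
  unfold stridedMean
  split_ifs with hk
  · have hs : 0 < s := Nat.pos_of_mul_pos_right (Nat.zero_lt_of_lt hk)
    rw [abs_div, Nat.abs_cast]
    gcongr
    exact hw _ (Nat.mod_lt _ hs) _ (Nat.div_lt_of_lt_mul hk)
  · rw [abs_zero]
    positivity

lemma exists_abs_eval_derivative_basis_le (n : ℕ) :
    ∃ B : ℝ, 0 < B ∧ ∀ N ≤ n, ∀ r < N, ∀ t : ℝ, |t| ≤ 2 * N →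
      |(Lagrange.basis (Finset.range N) (fun i : ℕ => (i : ℝ)) r).derivative.eval t| ≤ B := by
  let φ : ℕ → ℕ → ℝ → ℝ := fun N r t =>
    |(Lagrange.basis (Finset.range N) (fun i : ℕ => (i : ℝ)) r).derivative.eval t|
  have hφ : ∀ N r t, 0 ≤ φ N r t := fun _ _ _ => abs_nonneg _
  have hcont : Continuous fun t => ∑ N ∈ Finset.range (n + 1), ∑ r ∈ Finset.range N, φ N r t := by
    fun_prop
  obtain ⟨B, hB⟩ := (isCompact_Icc (a := -(2 * (n : ℝ))) (b := 2 * n)).exists_bound_of_continuousOn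
    hcont.continuousOn
  refine ⟨max B 1, by positivity, fun N hN r hr t ht => ?_⟩
  have htn : t ∈ Set.Icc (-(2 * (n : ℝ))) (2 * n) := by
    have hNn : (N : ℝ) ≤ n := by exact_mod_cast hN
    exact abs_le.1 (by linarith)
  calc φ N r t
      ≤ ∑ r ∈ Finset.range N, φ N r t :=
        Finset.single_le_sum (f := fun r => φ N r t) (fun r _ => hφ N r t) (Finset.mem_range.2 hr)
    _ ≤ ∑ N ∈ Finset.range (n + 1), ∑ r ∈ Finset.range N, φ N r t :=
        Finset.single_le_sum (f := fun N => ∑ r ∈ Finset.range N, φ N r t)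
          (fun N _ => Finset.sum_nonneg fun r _ => hφ N r t) (Finset.mem_range_succ_iff.2 hN)
    _ ≤ max B 1 := (le_abs_self _).trans ((hB t htn).trans (le_max_left _ _))

lemma exists_isDerivRule_progression_abs_le (n : ℕ) :
    ∃ B : ℝ, 0 < B ∧ ∀ N ≤ n, ∀ s y t : ℝ, 0 < s → |t - y| ≤ 2 * N * s →
      ∃ w : ℕ → ℝ, IsDerivRule (Finset.range N) (fun r => s * r + y) w t N ∧
        ∀ r < N, |w r| ≤ B / s := by
  obtain ⟨B, hB, hbasis⟩ := exists_abs_eval_derivative_basis_le n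
  refine ⟨B, hB, fun N hN s y t hs ht => ?_⟩
  have hrule := (IsDerivRule.lagrange (s := Finset.range N) (v := fun i : ℕ => (i : ℝ))
    Nat.cast_injective.injOn ((t - y) / s)).comp_affine hs.ne' y
  rw [mul_div_cancel₀ _ hs.ne', sub_add_cancel, Finset.card_range] at hrule
  refine ⟨_, hrule, fun r hr => ?_⟩
  rw [abs_div, abs_of_pos hs]
  gcongr
  refine hbasis N hN r hr _ ?_
  rwa [abs_div, abs_of_pos hs, div_le_iff₀ hs]

lemma exists_isDerivRule_range_abs_le (n : ℕ) :
    ∃ B : ℝ, 0 < B ∧ ∀ N m : ℕ, 0 < N → N ≤ n → N ≤ m → ∀ t : ℝ, -1 ≤ t → t ≤ m →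
      ∃ b : ℕ → ℝ, IsDerivRule (Finset.range m) (fun k => (k : ℝ)) b t N ∧
        ∀ k, |b k| ≤ B / m ^ 2 := by
  obtain ⟨B, hB, hprogression⟩ := exists_isDerivRule_progression_abs_le n
  refine ⟨B * (2 * n) ^ 2 + 1, by positivity, fun N m hN hNn hNm t ht ht' => ?_⟩
  obtain ⟨s, hs⟩ : ∃ s, s = m / N := ⟨_, rfl⟩
  have hs0 : 0 < s := hs ▸ Nat.div_pos hNm hN
  have hsN : s * N ≤ m := hs ▸ Nat.div_mul_le_self m N
  have hs0' : (0 : ℝ) < s := by exact_mod_cast hs0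
  have hm0 : (0 : ℝ) < m := by exact_mod_cast hN.trans_le hNm
  have hms : (m : ℝ) ≤ 2 * N * s := by
    have hlt : m < N * (s + 1) := hs ▸ Nat.lt_mul_div_succ m hN
    exact_mod_cast (by nlinarith : m ≤ 2 * N * s)
  -- Each residue class modulo `s` contains `N` of the nodes, at spacing `s`.
  have hclass : ∀ i < s, ∃ w : ℕ → ℝ,
      IsDerivRule (Finset.range N) (fun r => (s * r + i : ℝ)) w t N ∧
        ∀ r < N, |w r| ≤ B / s := by
    intro i hi
    have hi' : (i : ℝ) + 1 ≤ m := by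
      exact_mod_cast (Nat.succ_le_of_lt hi).trans ((Nat.le_mul_of_pos_right s hN).trans hsN)
    have hti : |t - i| ≤ m :=
      abs_le.2 ⟨by linarith, by linarith [(Nat.cast_nonneg i : (0 : ℝ) ≤ i)]⟩
    exact hprogression N hNn s i t hs0' (hti.trans hms)
  choose! w hrule hw using hclass
  refine ⟨stridedMean s N w, .stridedMean hs0'.ne' hsN hrule, fun k => ?_⟩
  refine (abs_stridedMean_le (by positivity) hw k).trans ?_
  rw [div_div, div_le_div_iff₀ (by positivity) (by positivity)]
  have hmn : (m : ℝ) ≤ 2 * n * s := hms.trans (by gcongr)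
  calc B * (m : ℝ) ^ 2 ≤ B * (2 * n * s) ^ 2 := by gcongr
    _ ≤ (B * (2 * n) ^ 2 + 1) * (s * s) := by nlinarith [mul_pos hs0' hs0']

lemma exists_isDerivRule_Ico_abs_le (n : ℕ) :
    ∃ B : ℝ, 0 < B ∧ ∀ (N p m : ℕ) (δ x : ℝ), 0 < N → N ≤ n → N ≤ m → 0 < δ →
      (p - 1 : ℝ) * δ ≤ x → x ≤ (p + m) * δ →
      ∃ b : ℕ → ℝ, IsDerivRule (Finset.Ico p (p + m)) (fun k => (k : ℝ) * δ) b x N ∧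
        ∀ k, |b k| ≤ B / (m ^ 2 * δ) := by
  obtain ⟨B, hB, hrange⟩ := exists_isDerivRule_range_abs_le n
  refine ⟨B, hB, fun N p m δ x hN hNn hNm hδ hx hx' => ?_⟩
  obtain ⟨b, hb, hb_le⟩ := hrange N m hN hNn hNm (x / δ - p)
    (by rw [le_sub_iff_add_le, le_div_iff₀ hδ]; linarith)
    (by rw [sub_le_iff_le_add, div_le_iff₀ hδ]; linarith)
  refine ⟨fun k => b (k - p) / δ, fun P hP => ?_, fun k => ?_⟩
  · have hx_eq : δ * (x / δ - p) + p * δ = x := by field_simp; ring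
    rw [← hx_eq, ← hb.comp_affine hδ.ne' _ P hP, Finset.sum_Ico_eq_sum_range,
      Nat.add_sub_cancel_left]
    simp only [Nat.add_sub_cancel_left, Nat.cast_add, add_mul, add_comm, mul_comm δ]
  · rw [abs_div, abs_of_pos hδ, ← div_div]
    gcongr
    exact hb_le _

lemma sum_abs_le_card_mul_of_sum_sq_le {ι : Type*} {s : Finset ι} {a : ι → ℝ} {X : ℝ}
    (hX : 0 ≤ X) (h : ∑ i ∈ s, a i ^ 2 ≤ s.card * X ^ 2) : ∑ i ∈ s, |a i| ≤ s.card * X := by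
  refine abs_le_of_sq_le_sq' ?_ (by positivity) |>.2
  calc (∑ i ∈ s, |a i|) ^ 2 ≤ s.card * ∑ i ∈ s, |a i| ^ 2 := sq_sum_le_card_mul_sum_sq
    _ ≤ s.card * (s.card * X ^ 2) := by simp only [sq_abs]; gcongr
    _ = (s.card * X) ^ 2 := by ring

/-- A differentiation rule of order `N` whose weights have the least sum of squares. For
`N = ℓ + 1` and the nodes `kδ`, `k ∈ M_{D_x}`, these are the minimizers of `(P_x)`. -/
def IsMinDerivRule {ι : Type*} (s : Finset ι) (v a : ι → ℝ) (x : ℝ) (N : ℕ) : Prop :=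
  IsDerivRule s v a x N ∧ ∀ b, IsDerivRule s v b x N → ∑ i ∈ s, a i ^ 2 ≤ ∑ i ∈ s, b i ^ 2

-- With at most `N` nodes, exactness to order `s.card` already determines the weights.
lemma IsMinDerivRule.sum_sq_le_of_min_card {ι : Type*} {s : Finset ι} {v a b : ι → ℝ} {x : ℝ}
    {N : ℕ} (ha : IsMinDerivRule s v a x N) (hv : Set.InjOn v s)
    (hb : IsDerivRule s v b x (min s.card N)) : ∑ i ∈ s, a i ^ 2 ≤ ∑ i ∈ s, b i ^ 2 := by
  rcases le_total s.card N with hN | hN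
  · rw [min_eq_left hN] at hb
    have hab : Set.EqOn a b s := (ha.1.mono hN).eqOn_of_card_le hv hb le_rfl
    exact (Finset.sum_congr rfl fun i hi => by rw [hab hi]).le
  · exact ha.2 b (by rwa [min_eq_right hN] at hb)

theorem exists_sum_abs_le_of_isMinDerivRule (ℓ : ℕ) :
    ∃ C : ℝ, 0 < C ∧ ∀ (p m : ℕ) (δ x : ℝ) (a : ℕ → ℝ), 0 < δ → 0 < m →
      (p - 1 : ℝ) * δ ≤ x → x ≤ (p + m) * δ →
      IsMinDerivRule (Finset.Ico p (p + m)) (fun k => (k : ℝ) * δ) a x (ℓ + 1) →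
      ∑ k ∈ Finset.Ico p (p + m), |a k| ≤ C / (m * δ) := by
  obtain ⟨B, hB, hcompare⟩ := exists_isDerivRule_Ico_abs_le (ℓ + 1)
  refine ⟨B, hB, fun p m δ x a hδ hm hx hx' ha => ?_⟩
  obtain ⟨b, hb, hb_le⟩ := hcompare (min m (ℓ + 1)) p m δ x (by omega) (min_le_right _ _)
    (min_le_left _ _) hδ hx hx'
  set M := Finset.Ico p (p + m)
  have hcard : M.card = m := by simp [M]
  have hinj : Set.InjOn (fun k : ℕ => (k : ℝ) * δ) M := fun i _ j _ hij =>
    Nat.cast_injective (mul_right_cancel₀ hδ.ne' hij)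
  have hb_sq : ∑ k ∈ M, b k ^ 2 ≤ M.card * (B / (m ^ 2 * δ)) ^ 2 := by
    rw [← nsmul_eq_mul]
    exact Finset.sum_le_card_nsmul _ _ _ fun k _ => sq_le_sq' (abs_le.1 (hb_le k)).1
      (abs_le.1 (hb_le k)).2
  have ha_sq := ha.sum_sq_le_of_min_card hinj (hcard ▸ hb)
  refine (sum_abs_le_card_mul_of_sum_sq_le (by positivity) (ha_sq.trans hb_sq)).trans_eq ?_
  rw [hcard]
  field_simp

lemma IsDerivRule.abs_sum_mul_sub_le {ι : Type*} {s : Finset ι} {v a : ι → ℝ} {x E : ℝ} {N : ℕ}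
    (ha : IsDerivRule s v a x N) {P : ℝ[X]} (hP : P.natDegree < N) {f : ℝ → ℝ}
    (hf : ∀ i ∈ s, |f (v i) - P.eval (v i)| ≤ E) :
    |∑ i ∈ s, a i * f (v i) - P.derivative.eval x| ≤ (∑ i ∈ s, |a i|) * E := by
  rw [← ha P hP, ← Finset.sum_sub_distrib, Finset.sum_mul]
  refine (Finset.abs_sum_le_sum_abs _ _).trans (Finset.sum_le_sum fun i hi => ?_)
  rw [← mul_sub, abs_mul]
  exact mul_le_mul_of_nonneg_left (hf i hi) (abs_nonneg _)

end WeightBounds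

section Grid

variable {ℓ n : ℕ} {T δ h x : ℝ}

lemma feasible_iff_isDerivRule {a : ℕ → ℝ} :
    Feasible ℓ n T δ h x a ↔
      IsDerivRule (Mset n T δ h x) (fun k => (k : ℝ) * δ) a x (ℓ + 1) := by
  rw [IsDerivRule.iff_pow]
  constructor
  · rintro ⟨hzero, hpos⟩ j hj
    rcases Nat.eq_zero_or_pos j with rfl | hj0
    · simpa using hzero
    · exact hpos j (Finset.mem_Icc.2 ⟨hj0, by omega⟩)
  · intro hpow
    exact ⟨by simpa using hpow 0 ℓ.succ_pos,
      fun j hj => hpow j (Nat.lt_succ_of_le (Finset.mem_Icc.1 hj).2)⟩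

lemma exists_Dseg_eq_Icc (hh : 0 ≤ h) (hx : 0 ≤ x) (hxT : x ≤ T - δ) :
    ∃ A B : ℝ, Dseg T δ h x = Set.Icc A B ∧ x ∈ Set.Icc A B ∧ B - A = 2 * h := by
  unfold Dseg
  split_ifs
  · exact ⟨0, 2 * h, rfl, ⟨hx, by linarith⟩, by ring⟩
  · exact ⟨x - h, x + h, rfl, ⟨by linarith, by linarith⟩, by ring⟩
  · exact ⟨T - δ - 2 * h, T - δ, rfl, ⟨by linarith, hxT⟩, by ring⟩

lemma exists_Mset_eq_Ico (hδ : 0 < δ) (hT : T = n * δ) (hh : 0 ≤ h) (hx : 0 ≤ x)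
    (hxT : x ≤ T - δ) :
    ∃ p m : ℕ, Mset n T δ h x = Finset.Ico p (p + m) ∧
      ((p : ℝ) - 1) * δ ≤ x ∧ x ≤ (p + m) * δ := by
  obtain ⟨A, B, hD, ⟨hAx, hxB⟩, -⟩ := exists_Dseg_eq_Icc hh hx hxT
  have hB : 0 ≤ B / δ := div_nonneg (hx.trans hxB) hδ.le
  obtain ⟨p, hp⟩ : ∃ p, p = max 1 ⌈A / δ⌉₊ := ⟨_, rfl⟩
  obtain ⟨q, hq⟩ : ∃ q, q = min n ⌊B / δ⌋₊ := ⟨_, rfl⟩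
  refine ⟨p, q + 1 - p, ?_, ?_, ?_⟩
  · ext k
    have hA_iff : A ≤ k * δ ↔ ⌈A / δ⌉₊ ≤ k := by rw [Nat.ceil_le, div_le_iff₀ hδ]
    have hB_iff : k * δ ≤ B ↔ k ≤ ⌊B / δ⌋₊ := by rw [Nat.le_floor_iff hB, le_div_iff₀ hδ]
    simp only [Mset, hD, Finset.mem_filter, Finset.mem_Icc, Set.mem_Icc, Finset.mem_Ico, hA_iff,
      hB_iff]
    omega
  · rcases max_choice 1 ⌈A / δ⌉₊ with hmax | hmax <;> rw [hp, hmax]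
    · simpa using hx
    · rcases Nat.eq_zero_or_pos ⌈A / δ⌉₊ with hzero | hpos
      · rw [hzero]
        simpa using (neg_nonpos.2 hδ.le).trans hx
      · have hceil := Nat.ceil_lt_add_one (Nat.ceil_pos.1 hpos).le
        exact ((lt_div_iff₀ hδ).1 (sub_lt_iff_lt_add.2 hceil)).le.trans hAx
  · have hqx : x ≤ (q + 1) * δ := by
      rcases min_choice n ⌊B / δ⌋₊ with hmin | hmin <;> rw [hq, hmin]
      · linarith
      · rw [← div_le_iff₀ hδ]
        exact (div_le_div_of_nonneg_right hxB hδ.le).trans (Nat.lt_floor_add_one _).le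
    refine hqx.trans (mul_le_mul_of_nonneg_right ?_ hδ.le)
    exact_mod_cast (by omega : q + 1 ≤ p + (q + 1 - p))

lemma natCast_mul_mem_Dseg {k : ℕ} (hk : k ∈ Mset n T δ h x) : (k : ℝ) * δ ∈ Dseg T δ h x :=
  (Finset.mem_filter.1 hk).2

lemma sub_le_of_mem_Dseg {y z : ℝ} (hy : y ∈ Dseg T δ h x) (hz : z ∈ Dseg T δ h x) :
    z - y ≤ 2 * h := by
  unfold Dseg at hy hz
  split_ifs at hy hz <;> linarith [hy.1, hz.2]

lemma sub_one_mul_le_of_Mset_eq_Ico {p m : ℕ} (hM : Mset n T δ h x = Finset.Ico p (p + m))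
    (hm : 0 < m) : (m - 1 : ℝ) * δ ≤ 2 * h := by
  have hfirst : p ∈ Mset n T δ h x := hM ▸ Finset.left_mem_Ico.2 (by omega)
  have hlast : p + (m - 1) ∈ Mset n T δ h x := hM ▸ Finset.mem_Ico.2 ⟨by omega, by omega⟩
  have hle := sub_le_of_mem_Dseg (natCast_mul_mem_Dseg hfirst) (natCast_mul_mem_Dseg hlast)
  rwa [← sub_mul, Nat.cast_add, add_sub_cancel_left, Nat.cast_pred hm] at hle

end Grid

section Holder

lemma flr_le {β : ℝ} (hβ : 0 ≤ β) : (flr β : ℝ) ≤ β := by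
  unfold flr
  rcases Nat.eq_zero_or_pos ⌈β⌉₊ with h | h
  · simpa [h] using hβ
  · rw [Nat.cast_pred h]
    linarith [Nat.ceil_lt_add_one hβ]

lemma le_flr_add_one (β : ℝ) : β ≤ flr β + 1 := by
  have h : ⌈β⌉₊ ≤ flr β + 1 := by unfold flr; omega
  exact (Nat.le_ceil β).trans (by exact_mod_cast h)

lemma flr_add_one {β : ℝ} (hβ : 0 < β) : flr (β + 1) = flr β + 1 := by
  have h : 0 < ⌈β⌉₊ := Nat.ceil_pos.2 hβ
  unfold flr
  rw [Nat.ceil_add_one hβ.le]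
  omega

lemma abs_le_mul_abs_sub_rpow_add_one {I : Set ℝ} (hI : Convex ℝ I) {g g' : ℝ → ℝ}
    {x₀ K γ : ℝ} (hx₀ : x₀ ∈ I) (hK : 0 ≤ K) (hγ : 0 ≤ γ) (hg₀ : g x₀ = 0)
    (hg : ∀ y ∈ I, HasDerivWithinAt g (g' y) I y) (hg' : ∀ y ∈ I, |g' y| ≤ K * |y - x₀| ^ γ)
    {y : ℝ} (hy : y ∈ I) : |g y| ≤ K * |y - x₀| ^ (γ + 1) := by
  have hsub : Set.uIcc x₀ y ⊆ I := segment_eq_uIcc x₀ y ▸ hI.segment_subset hx₀ hy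
  have hbound : ∀ z ∈ Set.uIcc x₀ y, ‖g' z‖ ≤ K * |y - x₀| ^ γ := by
    intro z hz
    refine (hg' z (hsub hz)).trans ?_
    gcongr K * ?_ ^ γ
    exact Set.abs_sub_left_of_mem_uIcc hz
  have hmvt := (convex_uIcc x₀ y).norm_image_sub_le_of_norm_hasDerivWithin_le
    (fun z hz => (hg z (hsub hz)).mono hsub) hbound Set.left_mem_uIcc Set.right_mem_uIcc
  rw [hg₀, sub_zero] at hmvt
  rwa [Real.rpow_add_one' (abs_nonneg _) (by positivity), ← mul_assoc]

lemma abs_sub_taylorWithinEval_le {I : Set ℝ} (hI : Convex ℝ I) (hI' : UniqueDiffOn ℝ I)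
    {x₀ K α : ℝ} (hx₀ : x₀ ∈ I) (hK : 0 ≤ K) (hα : 0 ≤ α) {m : ℕ} {f : ℝ → ℝ}
    (hf : ContDiffOn ℝ m f I)
    (hfα : ∀ y ∈ I,
      |iteratedDerivWithin m f I y - iteratedDerivWithin m f I x₀| ≤ K * |y - x₀| ^ α)
    {y : ℝ} (hy : y ∈ I) : |f y - taylorWithinEval f m I x₀ y| ≤ K * |y - x₀| ^ (m + α) := by
  induction m generalizing f y with
  | zero => simpa using hfα y hy
  | succ m ih =>
    rw [Nat.cast_succ, contDiffOn_succ_iff_derivWithin hI'] at hf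
    simp only [iteratedDerivWithin_succ'] at hfα
    rw [Nat.cast_succ, add_right_comm]
    refine abs_le_mul_abs_sub_rpow_add_one hI hx₀ hK (by positivity) ?_
      (fun z hz => (hf.1 z hz).hasDerivWithinAt.sub
        (hasDerivAt_taylorWithinEval_succ f m).hasDerivWithinAt)
      (fun z hz => ih hf.2.2 hfα hz) hy
    rw [Pi.sub_apply, taylorWithinEval_self, sub_self]

lemma exists_polynomial_eval_eq_taylorWithinEval (f : ℝ → ℝ) (m : ℕ) (I : Set ℝ) (x₀ : ℝ) :
    ∃ P : ℝ[X], P.natDegree ≤ m ∧ ∀ y, P.eval y = taylorWithinEval f m I x₀ y := by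
  refine ⟨∑ k ∈ Finset.range (m + 1),
    C ((k.factorial : ℝ)⁻¹ * iteratedDerivWithin k f I x₀) * (X - C x₀) ^ k, ?_, fun y => ?_⟩
  · refine natDegree_sum_le_of_forall_le _ _ fun k hk => (natDegree_C_mul_le _ _).trans ?_
    rw [natDegree_pow, natDegree_X_sub_C, mul_one]
    exact Finset.mem_range_succ_iff.1 hk
  · rw [taylor_within_apply, eval_finsetSum]
    refine Finset.sum_congr rfl fun k _ => ?_
    simp only [eval_mul, eval_C, eval_pow, eval_sub, eval_X, smul_eq_mul]
    ring

namespace HolderClass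

variable {β K c : ℝ} {I : Set ℝ} {f f' : ℝ → ℝ}

lemma exists_polynomial (hf : HolderClass (β + 1) K I f) (hβ : 0 < β) (hK : 0 ≤ K)
    (hI : Convex ℝ I) (hI' : UniqueDiffOn ℝ I) {x₀ : ℝ} (hx₀ : x₀ ∈ I) :
    ∃ P : ℝ[X], P.natDegree ≤ flr (β + 1) ∧ P.derivative.eval x₀ = derivWithin f I x₀ ∧
      ∀ y ∈ I, |f y - P.eval y| ≤ K * |y - x₀| ^ (β + 1) := by
  obtain ⟨P, hdeg, hP⟩ := exists_polynomial_eval_eq_taylorWithinEval f (flr (β + 1)) I x₀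
  refine ⟨P, hdeg, ?_, fun y hy => ?_⟩
  · have hderiv := hasDerivAt_taylorWithinEval_succ (x₀ := x₀) (x := x₀) (s := I) f (flr β)
    rw [← flr_add_one hβ, ← funext hP, taylorWithinEval_self] at hderiv
    exact (P.hasDerivAt x₀).unique hderiv
  · have hremainder := abs_sub_taylorWithinEval_le hI hI' hx₀ hK
      (sub_nonneg.2 (flr_le (by linarith))) hf.1 (fun z hz => hf.2 z hz x₀ hx₀) hy
    rwa [add_sub_cancel, ← hP] at hremainder

lemma sub_const (hf : HolderClass β K I f) (c : ℝ) : HolderClass β K I fun x => f x - c := by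
  refine ⟨hf.1.sub contDiffOn_const, fun x hx y hy => ?_⟩
  rcases Nat.eq_zero_or_pos (flr β) with hzero | hpos
  · simpa [hzero] using hf.2 x hx y hy
  · simpa only [sub_eq_neg_add _ c, iteratedDerivWithin_const_add hpos] using hf.2 x hx y hy

lemma const_mul (hf : HolderClass β K I f) (c : ℝ) :
    HolderClass β (|c| * K) I fun x => c * f x := by
  refine ⟨contDiffOn_const.mul hf.1, fun x hx y hy => ?_⟩
  rw [iteratedDerivWithin_const_mul_field, iteratedDerivWithin_const_mul_field,
    ← mul_sub, abs_mul, mul_assoc]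
  exact mul_le_mul_of_nonneg_left (hf.2 x hx y hy) (abs_nonneg c)

lemma of_hasDerivWithinAt (hf' : HolderClass β K I f') (hβ : 0 < β) (hI : UniqueDiffOn ℝ I)
    (hf : ∀ x ∈ I, HasDerivWithinAt f (f' x) I x) : HolderClass (β + 1) K I f := by
  have hderiv : Set.EqOn (derivWithin f I) f' I := fun x hx => (hf x hx).derivWithin (hI x hx)
  rw [HolderClass, flr_add_one hβ]
  refine ⟨?_, fun x hx y hy => ?_⟩
  · rw [Nat.cast_succ, contDiffOn_succ_iff_derivWithin hI]
    exact ⟨fun x hx => (hf x hx).differentiableWithinAt, by simp, hf'.1.congr hderiv⟩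
  · rw [iteratedDerivWithin_succ', iteratedDerivWithin_congr hderiv hx,
      iteratedDerivWithin_congr hderiv hy, Nat.cast_succ,
      add_sub_add_right_eq_sub]
    exact hf'.2 x hx y hy

end HolderClass

lemma hasDerivWithinAt_integral_Ioi {f : ℝ → ℝ} {u v t : ℝ} (hf : ContinuousOn f (Set.Icc u v))
    (hint : IntegrableOn f (Set.Ioi v)) (ht : t ∈ Set.Icc u v) :
    HasDerivWithinAt (fun s => ∫ x in Set.Ioi s, f x) (-f t) (Set.Icc u v) t := by
  have hintv : ∀ s ∈ Set.Icc u v, IntervalIntegrable f volume s v := fun s hs =>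
    (hf.mono (Set.Icc_subset_Icc_left hs.1)).intervalIntegrable_of_Icc hs.2
  have : Fact (t ∈ Set.Icc u v) := ⟨ht⟩
  have hderiv : HasDerivWithinAt (fun s => (∫ x in s..v, f x) + ∫ x in Set.Ioi v, f x) (-f t)
      (Set.Icc u v) t :=
    (intervalIntegral.integral_hasDerivWithinAt_left (hintv t ht)
      (hf.stronglyMeasurableAtFilter_nhdsWithin measurableSet_Icc t) (hf t ht)).add_const _
  exact hderiv.congr_of_mem
    (fun s hs => (intervalIntegral.integral_interval_add_Ioi' (hintv s hs) hint).symm) ht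

lemma HolderClass.rcov {G : ℝ → ℝ} {β L u v : ℝ} (hG : HolderClass β L (Set.Icc u v) G)
    (hβ : 0 < β) (huv : u < v) (hint : IntegrableOn (fun x => 1 - G x) (Set.Ioi v))
    (lam μ : ℝ) : HolderClass (β + 1) (|lam| * L) (Set.Icc u v) (Rcov G lam μ) := by
  have hI := uniqueDiffOn_Icc huv
  refine ((hG.sub_const 1).const_mul lam).of_hasDerivWithinAt hβ hI fun t ht => ?_
  have hcont : ContinuousOn (fun x => 1 - G x) (Set.Icc u v) :=
    continuousOn_const.sub hG.1.continuousOn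
  rw [← neg_sub 1 (G t)]
  exact ((hasDerivWithinAt_integral_Ioi hcont hint ht).const_mul lam).const_add _

end Holder

lemma exists_abs_sum_mul_sub_derivWithin_le (ℓ : ℕ) :
    ∃ C : ℝ, 0 < C ∧ ∀ (β K δ x : ℝ) (p m : ℕ) (I : Set ℝ) (f : ℝ → ℝ) (a : ℕ → ℝ),
      0 < β → flr (β + 1) ≤ ℓ → 0 ≤ K → 0 < δ → 0 < m →
      (p - 1 : ℝ) * δ ≤ x → x ≤ (p + m) * δ →
      Convex ℝ I → UniqueDiffOn ℝ I → x ∈ I → (∀ k ∈ Finset.Ico p (p + m), (k : ℝ) * δ ∈ I) →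
      HolderClass (β + 1) K I f →
      IsMinDerivRule (Finset.Ico p (p + m)) (fun k => (k : ℝ) * δ) a x (ℓ + 1) →
      |∑ k ∈ Finset.Ico p (p + m), a k * f (k * δ) - derivWithin f I x| ≤
        C * K * (m * δ) ^ β := by
  obtain ⟨C, hC, hweights⟩ := exists_sum_abs_le_of_isMinDerivRule ℓ
  refine ⟨C, hC, fun β K δ x p m I f a hβ hβℓ hK hδ hm hx hx' hI hI' hxI hnodes hf ha => ?_⟩
  obtain ⟨P, hdeg, hderiv, hP⟩ := hf.exists_polynomial hβ hK hI hI' hxI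
  have herror : ∀ k ∈ Finset.Ico p (p + m),
      |f (k * δ) - P.eval (k * δ)| ≤ K * (m * δ) ^ (β + 1) := by
    intro k hk
    have hdist : |k * δ - x| ≤ m * δ := by
      rw [Finset.mem_Ico] at hk
      have hpk : (p : ℝ) * δ ≤ k * δ := by gcongr; exact hk.1
      have hkm : (k + 1 : ℝ) * δ ≤ (p + m) * δ :=
        mul_le_mul_of_nonneg_right (by exact_mod_cast hk.2) hδ.le
      exact abs_le.2 ⟨by linarith, by linarith⟩
    exact (hP _ (hnodes k hk)).trans (by gcongr)
  rw [← hderiv]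
  calc |∑ k ∈ Finset.Ico p (p + m), a k * f (k * δ) - P.derivative.eval x|
      ≤ (∑ k ∈ Finset.Ico p (p + m), |a k|) * (K * (m * δ) ^ (β + 1)) :=
        ha.1.abs_sum_mul_sub_le (by omega) herror
    _ ≤ C / (m * δ) * (K * (m * δ) ^ (β + 1)) := by
        gcongr
        exact hweights p m δ x a hδ hm hx hx' ha
    _ = C * K * (m * δ) ^ β := by
        rw [Real.rpow_add_one (by positivity)]
        field_simp

theorem stmt7_general (ℓ : ℕ) :
    ∃ C₂ : ℝ, 0 < C₂ ∧
      ∀ (β K δ T x₀ h u v : ℝ) (n : ℕ) (R : ℝ → ℝ) (a : ℕ → ℝ),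
        0 < β → flr (β + 1) ≤ ℓ → 0 ≤ K → 0 < δ → T = n * δ → 0 ≤ x₀ → x₀ ≤ T - δ → 0 < h →
        HolderClass (β + 1) K (Set.Icc u v) R →
        Dseg T δ h x₀ ⊆ Set.Icc u v →
        Feasible ℓ n T δ h x₀ a →
        (∀ b : ℕ → ℝ, Feasible ℓ n T δ h x₀ b →
          (∑ k ∈ Mset n T δ h x₀, a k ^ 2) ≤ ∑ k ∈ Mset n T δ h x₀, b k ^ 2) →
        |(∑ k ∈ Mset n T δ h x₀, a k * R ((k : ℝ) * δ)) - derivWithin R (Set.Icc u v) x₀| ≤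
          C₂ * K * h ^ β := by
  obtain ⟨C, hC, hgrid⟩ := exists_abs_sum_mul_sub_derivWithin_le ℓ
  refine ⟨C * 4 ^ ℓ, by positivity,
    fun β K δ T x₀ h u v n R a hβ hβℓ hK hδ hT hx₀ hx₀T hh hR hD ha hmin => ?_⟩
  obtain ⟨A, B, hAB, hx₀AB, hBA⟩ := exists_Dseg_eq_Icc hh.le hx₀ hx₀T
  have hle : A ≤ B := by linarith
  have huv : u < v := by
    linarith [(hD (hAB ▸ Set.left_mem_Icc.2 hle)).1, (hD (hAB ▸ Set.right_mem_Icc.2 hle)).2]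
  have hrule : IsMinDerivRule (Mset n T δ h x₀) (fun k => (k : ℝ) * δ) a x₀ (ℓ + 1) :=
    ⟨feasible_iff_isDerivRule.1 ha, fun b hb => hmin b (feasible_iff_isDerivRule.2 hb)⟩
  have hnodes : ∀ k ∈ Mset n T δ h x₀, (k : ℝ) * δ ∈ Set.Icc u v := fun k hk =>
    hD (natCast_mul_mem_Dseg hk)
  rw [flr_add_one hβ] at hβℓ
  have hcard := hrule.1.one_lt_card (by omega)
  obtain ⟨p, m, hM, hpx, hxm⟩ := exists_Mset_eq_Ico hδ hT hh.le hx₀ hx₀T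
  have hm : 2 ≤ m := by rwa [hM, Nat.card_Ico, Nat.add_sub_cancel_left] at hcard
  have hmδ : m * δ ≤ 4 * h := by
    have hm' : (2 : ℝ) ≤ m := by exact_mod_cast hm
    nlinarith [sub_one_mul_le_of_Mset_eq_Ico hM (by omega)]
  have hβℓ' : β ≤ ℓ := (le_flr_add_one β).trans (by exact_mod_cast hβℓ)
  rw [hM] at hrule hnodes ⊢
  refine (hgrid β K δ x₀ p m _ R a hβ (by rwa [flr_add_one hβ]) hK hδ (by omega) hpx hxm
    (convex_Icc u v) (uniqueDiffOn_Icc huv) (hD (hAB ▸ hx₀AB)) hnodes hR hrule).trans ?_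
  calc C * K * (m * δ) ^ β ≤ C * K * (4 * h) ^ β := by gcongr
    _ = C * K * 4 ^ β * h ^ β := by rw [Real.mul_rpow (by norm_num) hh.le, mul_assoc (C * K)]
    _ ≤ C * K * 4 ^ (ℓ : ℝ) * h ^ β := by
        gcongr
        norm_num
    _ = C * 4 ^ ℓ * K * h ^ β := by rw [Real.rpow_natCast]; ring

/-- bias bound for the local polynomial estimator of `R′(x₀)`. -/
theorem stmt7 (ℓ : ℕ) (hℓ : 1 ≤ ℓ) :
    ∃ C₂ : ℝ, 0 < C₂ ∧
      ∀ (β L lam μ δ T x₀ h d : ℝ) (n : ℕ) (G : ℝ → ℝ) (a : ℕ → ℝ),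
        0 < β → flr β + 1 ≤ ℓ → 0 < L → 0 < lam → 0 < μ → 0 < δ → 1 ≤ n → T = n * δ →
        0 ≤ x₀ → x₀ ≤ T - δ → 0 < d →
        Monotone G → G 0 = 0 → (∀ x, 0 ≤ G x ∧ G x ≤ 1) →
        IntegrableOn (fun x => 1 - G x) (Set.Ioi 0) →
        μ⁻¹ = (∫ x in Set.Ioi (0 : ℝ), (1 - G x)) →
        HolderClass β L (Set.Icc (x₀ - d) (x₀ + d)) G →
        ((ℓ : ℝ) + 2) * δ / 2 ≤ h →
        Dseg T δ h x₀ ⊆ Set.Icc (x₀ - d) (x₀ + d) →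
        Feasible ℓ n T δ h x₀ a →
        (∀ b : ℕ → ℝ, Feasible ℓ n T δ h x₀ b →
          (∑ k ∈ Mset n T δ h x₀, a k ^ 2) ≤ ∑ k ∈ Mset n T δ h x₀, b k ^ 2) →
        |(∑ k ∈ Mset n T δ h x₀, a k * Rcov G lam μ ((k : ℝ) * δ)) -
            deriv (Rcov G lam μ) x₀| ≤ C₂ * lam * L * h ^ β := by
  obtain ⟨C, hC, hbias⟩ := stmt7_general ℓ
  refine ⟨C, hC, fun β L lam μ δ T x₀ h d n G a hβ hβℓ hL hlam _ hδ _ hT hx₀ hx₀T hd _ _ _ hint _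
    hG hh hD ha hmin => ?_⟩
  have hR := hG.rcov hβ (by linarith)
    (hint.mono_set (Set.Ioi_subset_Ioi (by linarith : 0 ≤ x₀ + d))) lam μ
  rw [abs_of_pos hlam] at hR
  rw [← derivWithin_of_mem_nhds (Icc_mem_nhds (sub_lt_self x₀ hd) (lt_add_of_pos_right x₀ hd)),
    mul_assoc C]
  exact hbias β (lam * L) δ T x₀ h _ _ n _ a hβ (by rwa [flr_add_one hβ]) (by positivity) hδ hT
    hx₀ hx₀T ((by positivity : 0 < (ℓ + 2 : ℝ) * δ / 2).trans_le hh) hR hD ha hmin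
end

section
/- Let v and u be real-valued functions in L¹([−π,π]) ∩ L²([−π,π]) with Fourier coefficients {v_j} and {u_j}. Suppose |v(ω)| ≤ M₁ < ∞ and v(ω) ≥ m > 0 for almost every ω, and Σ_{j=−∞}^{∞} |j| |u_j|² ≤ M₂ < ∞. Then for every n ≥ 1, ‖T_n(v)^{−1} T_n(vu) − T_n(u)‖_F² ≤ 4 m^{−2} M₁² M₂. -/
open MeasureTheory

/-- The `j`-th Fourier coefficient `v_j = (1/(2π)) ∫_{−π}^{π} v(ω) e^{−iωj} dω` of an
integrable function `v` on `[−π, π]`. -/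
noncomputable def fCoef (v : ℝ → ℝ) (j : ℤ) : ℂ :=
  (((2 * Real.pi)⁻¹ : ℝ) : ℂ) *
    ∫ ω in Set.Icc (-Real.pi) Real.pi, (v ω : ℂ) * Complex.exp (-(Complex.I * ω * j))

/-- The `n×n` Toeplitz matrix `T_n(v)` with entries `[T_n(v)]_{jk} = v_{j−k}`. -/
noncomputable def Toep (n : ℕ) (v : ℝ → ℝ) : Matrix (Fin n) (Fin n) ℂ :=
  Matrix.of fun j k : Fin n => fCoef v ((j : ℤ) - (k : ℤ))

/-!
`T_n(v)⁻¹ T_n(vu) - T_n(u)` is a Galerkin error. Let `V` be multiplication by `v` on `L²` of the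
circle, `e_j` the monomial of frequency `j`, `P` the orthogonal projection onto the span of
`e_0, …, e_{n-1}`, and `x_k = e_k u`. The columns of `T_n(v)`, `T_n(vu)` and `T_n(u)` are the
coordinates of `P V e_k`, `P V x_k` and `P x_k`, so the `k`-th column of the error gives the
coordinates of the vector `y` in the range of `P` with `P V y = P V (x_k - P x_k)`. Pairing with `y`
and using `Re ⟨y, V y⟩ ≥ m ‖y‖²` yields `m ‖y‖ ≤ ‖V‖ ‖x_k - P x_k‖`. By Parseval,
`‖x_k - P x_k‖²` is the sum of `|u_{l-k}|²` over `l ∉ [0, n)`, and in the sum over `k` each `|u_j|²`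
occurs at most `|j|` times. The resulting constant is `M₁² / m²`.
-/

section FiniteSection

open scoped InnerProductSpace Matrix
open RCLike (re)

variable {𝕜 E ι κ : Type*} [RCLike 𝕜] [SeminormedAddCommGroup E] [InnerProductSpace 𝕜 E]

variable (𝕜) in
/-- The cross Gram matrix of two families of vectors. For an orthonormal family `e` and an operator
`V`, `crossGram 𝕜 e (V ∘ e)` is the finite section (Galerkin matrix) of `V` on the span of `e`. -/
def crossGram (x : ι → E) (y : κ → E) : Matrix ι κ 𝕜 :=
  Matrix.of fun i k => ⟪x i, y k⟫_𝕜

theorem crossGram_mulVec [Fintype κ] (x : ι → E) (y : κ → E) (c : κ → 𝕜) :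
    crossGram 𝕜 x y *ᵥ c = fun i => ⟪x i, ∑ k, c k • y k⟫_𝕜 := by
  ext i
  simp [crossGram, Matrix.mulVec, dotProduct, inner_sum, inner_smul_right, mul_comm]

theorem star_dotProduct_inner [Fintype ι] (x : ι → E) (c : ι → 𝕜) (z : E) :
    star c ⬝ᵥ (fun i => ⟪x i, z⟫_𝕜) = ⟪∑ i, c i • x i, z⟫_𝕜 := by
  simp [dotProduct, sum_inner, inner_smul_left]

variable [Fintype ι] {e : ι → E}

theorem norm_sum_smul_sq_of_orthonormal (he : Orthonormal 𝕜 e) (c : ι → 𝕜) :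
    ‖∑ i, c i • e i‖ ^ 2 = ∑ i, ‖c i‖ ^ 2 := by
  rw [@norm_sq_eq_re_inner 𝕜, he.inner_sum, map_sum]
  exact Finset.sum_congr rfl fun i _ => by rw [RCLike.conj_mul]; norm_cast

theorem norm_sub_sum_inner_smul_sq_of_orthonormal (he : Orthonormal 𝕜 e) (x : E) :
    ‖x - ∑ i, ⟪e i, x⟫_𝕜 • e i‖ ^ 2 = ‖x‖ ^ 2 - ∑ i, ‖⟪e i, x⟫_𝕜‖ ^ 2 := by
  set y := ∑ i, ⟪e i, x⟫_𝕜 • e i with hy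
  have h_orth : ⟪y, x - y⟫_𝕜 = 0 := by
    rw [hy, sum_inner, ← hy]
    refine Finset.sum_eq_zero fun i _ => ?_
    rw [inner_smul_left, inner_sub_right, he.inner_right_fintype, sub_self, mul_zero]
  have h_pyth := @norm_add_sq 𝕜 _ _ _ _ y (x - y)
  rw [h_orth, map_zero, add_sub_cancel] at h_pyth
  linarith [norm_sum_smul_sq_of_orthonormal he fun i => ⟪e i, x⟫_𝕜]

variable {V : E →L[𝕜] E} {m : ℝ}

theorem sq_mul_sum_sq_norm_le_of_crossGram_mulVec_eq (he : Orthonormal 𝕜 e) (hm : 0 < m)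
    (hV : ∀ y, m * ‖y‖ ^ 2 ≤ re ⟪y, V y⟫_𝕜) {c : ι → 𝕜} {z : E}
    (hc : crossGram 𝕜 e (V ∘ e) *ᵥ c = fun i => ⟪e i, z⟫_𝕜) :
    m ^ 2 * ∑ i, ‖c i‖ ^ 2 ≤ ‖z‖ ^ 2 := by
  set y := ∑ i, c i • e i with hy
  have h_form : ⟪y, V y⟫_𝕜 = ⟪y, z⟫_𝕜 := by
    rw [hy, ← star_dotProduct_inner, ← star_dotProduct_inner, ← hc, crossGram_mulVec, map_sum]
    simp only [Function.comp_apply, map_smul]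
  have h_le : m * ‖y‖ ^ 2 ≤ ‖y‖ * ‖z‖ :=
    calc m * ‖y‖ ^ 2 ≤ re ⟪y, z⟫_𝕜 := h_form ▸ hV y
      _ ≤ ‖y‖ * ‖z‖ := re_inner_le_norm y z
  have h_norm : m * ‖y‖ ≤ ‖z‖ := by
    rcases (norm_nonneg y).eq_or_lt' with h0 | hpos
    · simp [h0]
    · exact le_of_mul_le_mul_left (by linarith) hpos
  calc m ^ 2 * ∑ i, ‖c i‖ ^ 2 = (m * ‖y‖) ^ 2 := by
        rw [mul_pow, norm_sum_smul_sq_of_orthonormal he]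
    _ ≤ ‖z‖ ^ 2 := by gcongr

variable [DecidableEq ι]

theorem isUnit_det_crossGram_comp (he : Orthonormal 𝕜 e) (hm : 0 < m)
    (hV : ∀ y, m * ‖y‖ ^ 2 ≤ re ⟪y, V y⟫_𝕜) : IsUnit (crossGram 𝕜 e (V ∘ e)).det := by
  rw [isUnit_iff_ne_zero]
  intro hdet
  obtain ⟨c, hc, hker⟩ := Matrix.exists_mulVec_eq_zero_iff.2 hdet
  have h_le := sq_mul_sum_sq_norm_le_of_crossGram_mulVec_eq he hm hV (c := c) (z := 0)
    (by simpa [← Pi.zero_def] using hker)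
  obtain ⟨i, hi⟩ := Function.ne_iff.1 hc
  have h_pos : 0 < ∑ i, ‖c i‖ ^ 2 :=
    Finset.sum_pos' (fun _ _ => by positivity)
      ⟨i, Finset.mem_univ i, pow_pos (norm_pos_iff.2 hi) 2⟩
  rw [norm_zero, zero_pow two_ne_zero] at h_le
  exact h_le.not_gt (by positivity)

-- Céa's lemma: the Galerkin solution is compared with the orthogonal projection, column by column.
theorem sq_mul_sum_sq_norm_crossGram_inv_mul_sub_le [Fintype κ] (he : Orthonormal 𝕜 e) (hm : 0 < m)
    (hV : ∀ y, m * ‖y‖ ^ 2 ≤ re ⟪y, V y⟫_𝕜) (x : κ → E) :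
    m ^ 2 * ∑ i, ∑ k,
        ‖((crossGram 𝕜 e (V ∘ e))⁻¹ * crossGram 𝕜 e (V ∘ x) - crossGram 𝕜 e x) i k‖ ^ 2 ≤
      ‖V‖ ^ 2 * ∑ k, (‖x k‖ ^ 2 - ∑ i, ‖⟪e i, x k⟫_𝕜‖ ^ 2) := by
  set D := (crossGram 𝕜 e (V ∘ e))⁻¹ * crossGram 𝕜 e (V ∘ x) - crossGram 𝕜 e x with hD
  let r : κ → E := fun k => x k - ∑ i, ⟪e i, x k⟫_𝕜 • e i
  have h_mul : crossGram 𝕜 e (V ∘ e) * D =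
      crossGram 𝕜 e (V ∘ x) - crossGram 𝕜 e (V ∘ e) * crossGram 𝕜 e x := by
    rw [hD, Matrix.mul_sub, Matrix.mul_nonsing_inv_cancel_left _ _
      (isUnit_det_crossGram_comp he hm hV)]
  have h_col (k : κ) : crossGram 𝕜 e (V ∘ e) *ᵥ D.col k = fun i => ⟪e i, V (r k)⟫_𝕜 := by
    have h_section : crossGram 𝕜 e (V ∘ e) *ᵥ (fun i => ⟪e i, x k⟫_𝕜) =
        fun i => ⟪e i, V (∑ i, ⟪e i, x k⟫_𝕜 • e i)⟫_𝕜 := by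
      simp only [crossGram_mulVec, Function.comp_apply, map_sum, map_smul]
    ext i
    calc (crossGram 𝕜 e (V ∘ e) *ᵥ D.col k) i
        = ⟪e i, V (x k)⟫_𝕜 - (crossGram 𝕜 e (V ∘ e) *ᵥ fun i => ⟪e i, x k⟫_𝕜) i :=
          congrFun₂ h_mul i k
      _ = ⟪e i, V (r k)⟫_𝕜 := by rw [h_section, ← inner_sub_right, ← map_sub]
  rw [Finset.sum_comm, Finset.mul_sum, Finset.mul_sum]
  refine Finset.sum_le_sum fun k _ => ?_
  calc m ^ 2 * ∑ i, ‖D i k‖ ^ 2 ≤ ‖V (r k)‖ ^ 2 :=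
        sq_mul_sum_sq_norm_le_of_crossGram_mulVec_eq he hm hV (h_col k)
    _ ≤ (‖V‖ * ‖r k‖) ^ 2 := by gcongr; exact V.le_opNorm _
    _ = ‖V‖ ^ 2 * (‖x k‖ ^ 2 - ∑ i, ‖⟪e i, x k⟫_𝕜‖ ^ 2) := by
        rw [mul_pow, norm_sub_sum_inner_smul_sq_of_orthonormal he]

end FiniteSection

section DifferenceCount

open Finset

theorem hasSum_card_notMem_image_nsmul {ι G M : Type*} [Fintype ι] [AddGroup G] [DecidableEq G]
    [AddCommGroup M] [TopologicalSpace M] [IsTopologicalAddGroup M] {g : ι → G}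
    (hg : Function.Injective g) {a : G → M} {S : M} (ha : HasSum a S) :
    HasSum (fun j => #{k | j + g k ∉ univ.image g} • a j) (∑ k, (S - ∑ l, a (g l - g k))) := by
  have h_hit (k : ι) : HasSum (fun j => if j + g k ∉ univ.image g then 0 else a j)
      (∑ l, a (g l - g k)) := by
    have h_inj : Function.Injective fun l => g l - g k := sub_left_injective.comp hg
    rw [← h_inj.hasSum_iff]
    · convert hasSum_fintype _ using 2 with l
      simp
    · intro j hj
      refine if_pos fun h_mem => hj ?_
      obtain ⟨l, -, hl⟩ := mem_image.1 h_mem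
      exact ⟨l, sub_eq_of_eq_add hl⟩
  have h_miss (k : ι) : HasSum (fun j => if j + g k ∉ univ.image g then a j else 0)
      (S - ∑ l, a (g l - g k)) := by
    convert ha.sub (h_hit k) using 2 with j
    split_ifs <;> simp
  convert hasSum_sum fun k (_ : k ∈ univ) => h_miss k using 2 with j
  rw [← sum_filter, sum_const]

theorem card_add_notMem_image_le_natAbs (n : ℕ) (j : ℤ) :
    #{k : Fin n | j + (k : ℤ) ∉ univ.image fun l : Fin n => (l : ℤ)} ≤ j.natAbs := by
  calc #{k : Fin n | j + (k : ℤ) ∉ univ.image fun l : Fin n => (l : ℤ)}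
      ≤ #(Ico 0 (-j) ∪ Ico (n - j) n) := by
        refine card_le_card_of_injOn (fun k => (k : ℤ)) (fun k hk => ?_) fun k _ l _ h => ?_
        · have h_notMem := (mem_filter.1 hk).2
          simp only [coe_union, coe_Ico, Set.mem_union, Set.mem_Ico]
          by_contra! h_range
          exact h_notMem (mem_image.2 ⟨⟨(j + k).toNat, by omega⟩, mem_univ _, by simp only; omega⟩)
        · exact Fin.ext (Int.natCast_inj.1 h)
    _ ≤ #(Ico 0 (-j)) + #(Ico (n - j) (n : ℤ)) := card_union_le _ _
    _ = j.natAbs := by simp only [Int.card_Ico]; omega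

theorem sum_sub_sum_sub_le_tsum_abs_mul (n : ℕ) {a : ℤ → ℝ} {S : ℝ} (ha : ∀ j, 0 ≤ a j)
    (hS : HasSum a S) (hs : Summable fun j : ℤ => |(j : ℝ)| * a j) :
    ∑ k : Fin n, (S - ∑ l : Fin n, a ((l : ℤ) - (k : ℤ))) ≤ ∑' j : ℤ, |(j : ℝ)| * a j := by
  have h_inj : Function.Injective fun k : Fin n => (k : ℤ) :=
    Nat.cast_injective.comp Fin.val_injective
  refine hasSum_le (fun j => ?_) (hasSum_card_notMem_image_nsmul h_inj hS) hs.hasSum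
  rw [nsmul_eq_mul, ← Int.cast_abs, ← Nat.cast_natAbs]
  gcongr
  · exact ha j
  · exact card_add_notMem_image_le_natAbs n j

end DifferenceCount

section MulOperator

open scoped InnerProductSpace ENNReal

variable {α : Type*} [MeasurableSpace α] {μ : Measure α}

/-- The operator of multiplication by an essentially bounded function `v` on `L²`. -/
noncomputable def mulOperator (v : Lp ℂ ∞ μ) : Lp ℂ 2 μ →L[ℂ] Lp ℂ 2 μ :=
  (ContinuousLinearMap.mul ℂ ℂ).holderL μ ∞ 2 2 v

theorem coeFn_mulOperator (v : Lp ℂ ∞ μ) (f : Lp ℂ 2 μ) :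
    mulOperator v f =ᵐ[μ] fun x => v x * f x :=
  (ContinuousLinearMap.mul ℂ ℂ).coeFn_holder v f

theorem norm_mulOperator_le (v : Lp ℂ ∞ μ) : ‖mulOperator v‖ ≤ ‖v‖ :=
  ContinuousLinearMap.opNorm_le_bound _ (norm_nonneg v) fun f => by
    simpa [mulOperator] using (ContinuousLinearMap.mul ℂ ℂ).norm_holder_apply_apply_le (r := 2) v f

theorem mul_norm_sq_le_re_inner_mulOperator {v : Lp ℂ ∞ μ} {m : ℝ} (hv : ∀ᵐ x ∂μ, m ≤ (v x).re)
    (f : Lp ℂ 2 μ) : m * ‖f‖ ^ 2 ≤ RCLike.re ⟪f, mulOperator v f⟫_ℂ := by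
  have h_int := L2.integrable_inner (𝕜 := ℂ) f f
  rw [@norm_sq_eq_re_inner ℂ, L2.inner_def, L2.inner_def, ← integral_re h_int,
    ← integral_re (L2.integrable_inner _ _), ← integral_const_mul]
  refine integral_mono_ae (h_int.re.const_mul m) (L2.integrable_inner _ _).re ?_
  filter_upwards [hv, coeFn_mulOperator v f] with x hx hvf
  have h_inner : ⟪f x, v x * f x⟫_ℂ = v x * ⟪f x, f x⟫_ℂ := by rw [← smul_eq_mul, inner_smul_right]
  rw [hvf, h_inner, RCLike.mul_re, inner_self_im, mul_zero, sub_zero]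
  exact mul_le_mul_of_nonneg_right hx inner_self_nonneg

end MulOperator

section Circle

open AddCircle
open scoped InnerProductSpace ENNReal

variable {T : ℝ} [Fact (0 < T)]

/-- The `n × n` Toeplitz matrix of a complex symbol on the circle of circumference `T`. -/
noncomputable def circleToeplitz (n : ℕ) (f : AddCircle T → ℂ) : Matrix (Fin n) (Fin n) ℂ :=
  Matrix.of fun j k : Fin n => fourierCoeff f ((j : ℤ) - (k : ℤ))

theorem fourierCoeff_fourier_mul (f : AddCircle T → ℂ) (j k : ℤ) :
    fourierCoeff (fun x => fourier k x * f x) j = fourierCoeff f (j - k) := by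
  simp only [fourierCoeff, smul_eq_mul, ← mul_assoc, ← fourier_add, neg_sub, neg_add_eq_sub]

theorem inner_fourierLp (f : Lp ℂ 2 (haarAddCircle (T := T))) (j : ℤ) :
    ⟪fourierLp 2 j, f⟫_ℂ = fourierCoeff f j := by
  rw [← fourierBasis_repr, fourierBasis.repr_apply_apply, coe_fourierBasis]

theorem hasSum_sq_norm_fourierCoeff (f : Lp ℂ 2 (haarAddCircle (T := T))) :
    HasSum (fun j => ‖fourierCoeff f j‖ ^ 2) (‖f‖ ^ 2) := by
  have h_norm : ‖f‖ ^ 2 = ∫ t, ‖f t‖ ^ 2 ∂haarAddCircle := by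
    rw [@norm_sq_eq_re_inner ℂ, L2.inner_def, ← integral_re (L2.integrable_inner f f)]
    simp only [inner_self_eq_norm_sq]
  exact h_norm ▸ hasSum_sq_fourierCoeff f

theorem mulOperator_fourierLp_ae_eq (k : ℤ) (f : Lp ℂ 2 (haarAddCircle (T := T))) :
    mulOperator (fourierLp ∞ k) f =ᵐ[haarAddCircle] fun t => fourier k t * f t := by
  filter_upwards [coeFn_mulOperator (fourierLp ∞ k) f, coeFn_fourierLp ∞ k] with t h_mul h_fourier
  rw [h_mul, h_fourier]

theorem norm_mulOperator_fourierLp_apply (k : ℤ) (f : Lp ℂ 2 (haarAddCircle (T := T))) :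
    ‖mulOperator (fourierLp ∞ k) f‖ = ‖f‖ := by
  refine le_antisymm (Lp.norm_le_norm_of_ae_le ?_) (Lp.norm_le_norm_of_ae_le ?_)
  all_goals
    filter_upwards [mulOperator_fourierLp_ae_eq k f] with t ht
    rw [ht, norm_mul, fourier_apply, Circle.norm_coe, one_mul]

theorem inner_fourierLp_mulOperator_fourierLp (f : Lp ℂ 2 (haarAddCircle (T := T))) (j k : ℤ) :
    ⟪fourierLp 2 j, mulOperator (fourierLp ∞ k) f⟫_ℂ = fourierCoeff f (j - k) := by
  rw [inner_fourierLp, fourierCoeff_congr_ae (mulOperator_fourierLp_ae_eq k f),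
    fourierCoeff_fourier_mul]

/-- The monomials of frequencies `0, …, n - 1` in `L²` of the circle, whose span carries the finite
sections. -/
noncomputable def fourierBlock (n : ℕ) (j : Fin n) : Lp ℂ 2 (haarAddCircle (T := T)) :=
  fourierLp 2 (j : ℤ)

/-- The products of `f` with the monomials of frequencies `0, …, n - 1`: the columns of the
multiplication operator by `f`, which need not be bounded when `f` is only in `L²`. -/
noncomputable def fourierShift (n : ℕ) (f : Lp ℂ 2 (haarAddCircle (T := T))) (k : Fin n) :
    Lp ℂ 2 (haarAddCircle (T := T)) :=
  mulOperator (fourierLp ∞ (k : ℤ)) f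

theorem orthonormal_fourierBlock (n : ℕ) : Orthonormal ℂ (fourierBlock (T := T) n) :=
  orthonormal_fourier.comp _ (Nat.cast_injective.comp Fin.val_injective)

theorem circleToeplitz_eq_crossGram_fourierShift (n : ℕ) (f : Lp ℂ 2 (haarAddCircle (T := T))) :
    circleToeplitz n f = crossGram ℂ (fourierBlock n) (fourierShift n f) := by
  ext j k
  exact (inner_fourierLp_mulOperator_fourierLp f j k).symm

theorem mulOperator_fourierShift (n : ℕ) (v : Lp ℂ ∞ (haarAddCircle (T := T)))
    (f : Lp ℂ 2 (haarAddCircle (T := T))) :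
    mulOperator v ∘ fourierShift n f = fourierShift n (mulOperator v f) := by
  ext1 k
  refine Lp.ext ?_
  simp only [Function.comp_apply, fourierShift]
  filter_upwards [coeFn_mulOperator v (mulOperator (fourierLp ∞ (k : ℤ)) f),
    mulOperator_fourierLp_ae_eq k f, mulOperator_fourierLp_ae_eq k (mulOperator v f),
    coeFn_mulOperator v f] with t h₁ h₂ h₃ h₄
  rw [h₁, h₂, h₃, h₄, mul_left_comm]

theorem circleToeplitz_eq_crossGram_mulOperator_comp (n : ℕ) (v : Lp ℂ ∞ (haarAddCircle (T := T))) :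
    circleToeplitz n v = crossGram ℂ (fourierBlock n) (mulOperator v ∘ fourierBlock n) := by
  ext j k
  have h_ae : mulOperator v (fourierBlock n k) =ᵐ[haarAddCircle] fun t => fourier k t * v t := by
    filter_upwards [coeFn_mulOperator v (fourierBlock n k), coeFn_fourierLp 2 k] with t h₁ h₂
    rw [h₁, fourierBlock, h₂, mul_comm]
  calc fourierCoeff v ((j : ℤ) - (k : ℤ))
      = fourierCoeff (mulOperator v (fourierBlock n k)) j := by
        rw [fourierCoeff_congr_ae h_ae, fourierCoeff_fourier_mul]
    _ = ⟪fourierBlock n j, mulOperator v (fourierBlock n k)⟫_ℂ := (inner_fourierLp _ _).symm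

theorem sum_sq_norm_fourierShift_sub_le (n : ℕ) {f : Lp ℂ 2 (haarAddCircle (T := T))}
    (hsum : Summable fun j : ℤ => |(j : ℝ)| * ‖fourierCoeff f j‖ ^ 2) :
    ∑ k, (‖fourierShift n f k‖ ^ 2 - ∑ j, ‖⟪fourierBlock n j, fourierShift n f k⟫_ℂ‖ ^ 2) ≤
      ∑' j : ℤ, |(j : ℝ)| * ‖fourierCoeff f j‖ ^ 2 := by
  simp only [fourierShift, fourierBlock, inner_fourierLp_mulOperator_fourierLp,
    norm_mulOperator_fourierLp_apply]
  exact sum_sub_sum_sub_le_tsum_abs_mul n (a := fun j => ‖fourierCoeff f j‖ ^ 2)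
    (fun j => by positivity) (hasSum_sq_norm_fourierCoeff f) hsum

theorem sq_mul_sum_sq_norm_circleToeplitz_inv_mul_sub_le (n : ℕ)
    {v : Lp ℂ ∞ (haarAddCircle (T := T))} {u : Lp ℂ 2 (haarAddCircle (T := T))} {m : ℝ}
    (hm : 0 < m) (hv : ∀ᵐ t ∂haarAddCircle, m ≤ (v t).re)
    (hsum : Summable fun j : ℤ => |(j : ℝ)| * ‖fourierCoeff u j‖ ^ 2) :
    m ^ 2 * ∑ j, ∑ k, ‖((circleToeplitz n v)⁻¹ * circleToeplitz n (mulOperator v u) -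
        circleToeplitz n u) j k‖ ^ 2 ≤
      ‖v‖ ^ 2 * ∑' j : ℤ, |(j : ℝ)| * ‖fourierCoeff u j‖ ^ 2 := by
  have h_tsum_nonneg : 0 ≤ ∑' j : ℤ, |(j : ℝ)| * ‖fourierCoeff u j‖ ^ 2 :=
    tsum_nonneg fun j => by positivity
  rw [circleToeplitz_eq_crossGram_mulOperator_comp, circleToeplitz_eq_crossGram_fourierShift,
    circleToeplitz_eq_crossGram_fourierShift, ← mulOperator_fourierShift]
  calc _ ≤ ‖mulOperator v‖ ^ 2 * ∑ k, (‖fourierShift n u k‖ ^ 2 -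
          ∑ j, ‖⟪fourierBlock n j, fourierShift n u k⟫_ℂ‖ ^ 2) :=
        sq_mul_sum_sq_norm_crossGram_inv_mul_sub_le (orthonormal_fourierBlock n) hm
          (mul_norm_sq_le_re_inner_mulOperator hv) _
    _ ≤ ‖mulOperator v‖ ^ 2 * ∑' j : ℤ, |(j : ℝ)| * ‖fourierCoeff u j‖ ^ 2 := by
        gcongr
        exact sum_sq_norm_fourierShift_sub_le n hsum
    _ ≤ ‖v‖ ^ 2 * ∑' j : ℤ, |(j : ℝ)| * ‖fourierCoeff u j‖ ^ 2 :=
        mul_le_mul_of_nonneg_right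
          (pow_le_pow_left₀ (norm_nonneg _) (norm_mulOperator_le v) 2) h_tsum_nonneg

theorem circleToeplitz_congr_ae (n : ℕ) {f g : AddCircle T → ℂ} (h : f =ᵐ[haarAddCircle] g) :
    circleToeplitz n f = circleToeplitz n g := by
  rw [circleToeplitz, circleToeplitz, fourierCoeff_congr_ae h]

theorem stmt18_general (n : ℕ) {v u : AddCircle T → ℂ} {M m : ℝ} (hm : 0 < m)
    (hv : AEStronglyMeasurable v haarAddCircle) (hu : MemLp u 2 haarAddCircle)
    (hM : ∀ᵐ t ∂haarAddCircle, ‖v t‖ ≤ M) (hlow : ∀ᵐ t ∂haarAddCircle, m ≤ (v t).re)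
    (hsum : Summable fun j : ℤ => |(j : ℝ)| * ‖fourierCoeff u j‖ ^ 2) :
    ∑ j : Fin n, ∑ k : Fin n, ‖((circleToeplitz n v)⁻¹ * circleToeplitz n (fun t => v t * u t) -
        circleToeplitz n u) j k‖ ^ 2 ≤
      (M / m) ^ 2 * ∑' j : ℤ, |(j : ℝ)| * ‖fourierCoeff u j‖ ^ 2 := by
  have hv_top : MemLp v ∞ haarAddCircle := memLp_top_of_bound hv M hM
  have hv_ae := hv_top.coeFn_toLp
  have hu_ae := hu.coeFn_toLp
  have hvu_ae : mulOperator hv_top.toLp hu.toLp =ᵐ[haarAddCircle] fun t => v t * u t :=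
    (coeFn_mulOperator _ _).trans (hv_ae.mul hu_ae)
  have hlow' : ∀ᵐ t ∂haarAddCircle, m ≤ (hv_top.toLp v t).re := by
    filter_upwards [hlow, hv_ae] with t ht hvt using hvt ▸ ht
  have hM₀ : 0 ≤ M := hM.exists.elim fun t => (norm_nonneg (v t)).trans
  have h_norm : ‖hv_top.toLp‖ ≤ M := by
    rw [Lp.norm_toLp, eLpNorm_exponent_top]
    exact ENNReal.toReal_le_of_le_ofReal hM₀ (eLpNormEssSup_le_of_ae_bound hM)
  have h_tsum_nonneg : 0 ≤ ∑' j : ℤ, |(j : ℝ)| * ‖fourierCoeff u j‖ ^ 2 :=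
    tsum_nonneg fun j => by positivity
  have h_bound := sq_mul_sum_sq_norm_circleToeplitz_inv_mul_sub_le n hm hlow'
    (fourierCoeff_congr_ae hu_ae ▸ hsum)
  rw [circleToeplitz_congr_ae n hv_ae, circleToeplitz_congr_ae n hu_ae,
    circleToeplitz_congr_ae n hvu_ae, fourierCoeff_congr_ae hu_ae] at h_bound
  rw [div_pow, div_mul_eq_mul_div, le_div_iff₀' (by positivity)]
  exact h_bound.trans
    (mul_le_mul_of_nonneg_right (pow_le_pow_left₀ (norm_nonneg _) h_norm 2) h_tsum_nonneg)

end Circle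

section Interval

open AddCircle

instance fact_two_pi_pos : Fact (0 < 2 * Real.pi) :=
  ⟨Real.two_pi_pos⟩

/-- The function on the circle of circumference `2π` that agrees with `f` on `(-π, π]`. -/
noncomputable def circleLift (f : ℝ → ℝ) : AddCircle (2 * Real.pi) → ℂ :=
  liftIoc (2 * Real.pi) (-Real.pi) fun ω => (f ω : ℂ)

theorem circleLift_mul (f g : ℝ → ℝ) :
    circleLift (fun ω => f ω * g ω) = fun t => circleLift f t * circleLift g t := by
  ext t
  simp [circleLift, liftIoc]

theorem fourierCoeff_circleLift (f : ℝ → ℝ) (j : ℤ) :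
    fourierCoeff (circleLift f) j = fCoef f j := by
  have h_end : -Real.pi + 2 * Real.pi = Real.pi := by ring
  have h_exp (ω : ℝ) : fourier (-j) (ω : AddCircle (2 * Real.pi)) =
      Complex.exp (-(Complex.I * ω * j)) := by
    rw [fourier_coe_apply]
    congr 1
    push_cast
    field_simp
  rw [fourierCoeff_eq_intervalIntegral _ _ (-Real.pi), fCoef, integral_Icc_eq_integral_Ioc, h_end,
    intervalIntegral.integral_of_le (by linarith [Real.pi_pos]), one_div, ← Complex.real_smul]
  congr 1
  refine setIntegral_congr_fun measurableSet_Ioc fun ω hω => ?_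
  rw [h_exp, smul_eq_mul, circleLift, liftIoc_coe_apply (h_end.symm ▸ hω), mul_comm]

theorem circleToeplitz_circleLift (n : ℕ) (f : ℝ → ℝ) :
    circleToeplitz n (circleLift f) = Toep n f := by
  simp only [circleToeplitz, Toep, fourierCoeff_circleLift]

theorem restrict_Ioc_le_restrict_Icc :
    volume.restrict (Set.Ioc (-Real.pi) (-Real.pi + 2 * Real.pi)) ≤
      volume.restrict (Set.Icc (-Real.pi) Real.pi) :=
  Measure.restrict_mono (Set.Ioc_subset_Icc_self.trans (Set.Icc_subset_Icc_right (by linarith)))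
    le_rfl

theorem ae_circleLift {p : ℂ → Prop} {f : ℝ → ℝ}
    (h : ∀ᵐ ω ∂volume.restrict (Set.Icc (-Real.pi) Real.pi), p (f ω)) :
    ∀ᵐ t ∂haarAddCircle, p (circleLift f t) := by
  have h_rep : MeasurePreserving
      (fun t => (equivIoc (2 * Real.pi) (-Real.pi) t : ℝ)) volume
      (volume.restrict (Set.Ioc (-Real.pi) (-Real.pi + 2 * Real.pi))) :=
    (measurePreserving_subtype_coe measurableSet_Ioc).comp (measurePreserving_equivIoc _)
  have h_vol := h_rep.quasiMeasurePreserving.ae (ae_mono restrict_Ioc_le_restrict_Icc h)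
  rw [volume_eq_smul_haarAddCircle] at h_vol
  exact (Measure.ae_ennreal_smul_measure_iff (by simp [Real.pi_pos])).1 h_vol

theorem memLp_circleLift {p : ENNReal} {f : ℝ → ℝ}
    (hf : MemLp f p (volume.restrict (Set.Icc (-Real.pi) Real.pi))) :
    MemLp (circleLift f) p haarAddCircle :=
  (hf.mono_measure restrict_Ioc_le_restrict_Icc).ofReal.memLp_liftIoc.haarAddCircle

end Interval

/-- Lemma, part (v): `‖T_n(v)⁻¹T_n(vu) − T_n(u)‖_F² ≤ 4m⁻²M₁²M₂`. -/
theorem stmt18 (n : ℕ) (hn : 1 ≤ n) (v u : ℝ → ℝ) (M₁ M₂ m : ℝ) (hm : 0 < m)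
    (hv1 : IntegrableOn v (Set.Icc (-Real.pi) Real.pi))
    (hv2 : IntegrableOn (fun ω => (v ω) ^ 2) (Set.Icc (-Real.pi) Real.pi))
    (hu1 : IntegrableOn u (Set.Icc (-Real.pi) Real.pi))
    (hu2 : IntegrableOn (fun ω => (u ω) ^ 2) (Set.Icc (-Real.pi) Real.pi))
    (hM1 : ∀ᵐ ω ∂(volume.restrict (Set.Icc (-Real.pi) Real.pi)), |v ω| ≤ M₁)
    (hlow : ∀ᵐ ω ∂(volume.restrict (Set.Icc (-Real.pi) Real.pi)), m ≤ v ω)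
    (hsum : Summable fun j : ℤ => |(j : ℝ)| * ‖fCoef u j‖ ^ 2)
    (hM2 : (∑' j : ℤ, |(j : ℝ)| * ‖fCoef u j‖ ^ 2) ≤ M₂) :
    (∑ j : Fin n, ∑ k : Fin n,
        ‖((Toep n v)⁻¹ * Toep n (fun ω => v ω * u ω) - Toep n u) j k‖ ^ 2) ≤
      4 * (m ^ 2)⁻¹ * M₁ ^ 2 * M₂ := by
  have hv_meas := (memLp_circleLift (memLp_one_iff_integrable.2 hv1)).aestronglyMeasurable
  have hu_L2 := memLp_circleLift ((memLp_two_iff_integrable_sq hu1.aestronglyMeasurable).2 hu2)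
  have hM₂ : 0 ≤ M₂ := le_trans (tsum_nonneg fun j => by positivity) hM2
  have h_bound := stmt18_general n hm hv_meas hu_L2
    (ae_circleLift (p := fun z => ‖z‖ ≤ M₁) (by simpa using hM1))
    (ae_circleLift (p := fun z => m ≤ z.re) (by simpa using hlow))
    (by simpa only [fourierCoeff_circleLift] using hsum)
  simp only [← circleLift_mul, circleToeplitz_circleLift, fourierCoeff_circleLift] at h_bound
  calc _ ≤ (M₁ / m) ^ 2 * M₂ := h_bound.trans (by gcongr)
    _ ≤ 4 * ((M₁ / m) ^ 2 * M₂) := le_mul_of_one_le_left (by positivity) (by norm_num)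
    _ = 4 * (m ^ 2)⁻¹ * M₁ ^ 2 * M₂ := by ring
end
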